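/- arXiv:1910.03745 — 2 statements merged into one kernel-verified Lean document; each statement's English description precedes it below -/
import Mathlib

section
/- For every integer ℓ ≥ 3, every edge-colored graph (G,c) on n > 432ℓ vertices with δ^c(G) ≥ (n+1)/2 contains a rainbow ℓ-cycle. -/
open Finset

variable {V : Type*}

/-- Number of distinct colors on edges incident to `v`. -/
noncomputable def colorDeg (G : SimpleGraph V) (c : Sym2 V → ℕ) (v : V) : ℕ :=
  Set.ncard {α : ℕ | ∃ u, G.Adj u v ∧ c s(u, v) = α}

/-- Number of distinct colors `c({u,v})` over `u ∈ N(v) ∩ U`. -/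
noncomputable def colorDegOn (G : SimpleGraph V) (c : Sym2 V → ℕ) (v : V) (U : Set V) : ℕ :=
  Set.ncard {α : ℕ | ∃ u ∈ U, G.Adj u v ∧ c s(u, v) = α}

/-- Minimum color-degree `δ^c(G)`. -/
noncomputable def minColorDeg (G : SimpleGraph V) (c : Sym2 V → ℕ) : ℕ :=
  ⨅ v : V, colorDeg G c v

/-- `(G,c)` is edge-minimal: no proper spanning subgraph has the same minimum color-degree. -/
def EdgeMinimal (G : SimpleGraph V) (c : Sym2 V → ℕ) : Prop :=
  ∀ H : SimpleGraph V, H ≤ G → H ≠ G → minColorDeg H c ≠ minColorDeg G c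

/-- `(G,c)` contains a rainbow cycle on `ℓ` vertices. -/
def HasRainbowCycle (G : SimpleGraph V) (c : Sym2 V → ℕ) (ℓ : ℕ) : Prop :=
  ∃ (u : V) (p : G.Walk u u), p.IsCycle ∧ p.length = ℓ ∧ (p.edges.map c).Nodup

/-- There is a rainbow path from `v` to `y` on `k` vertices whose edge colors avoid `C`. -/
def RainbowPathAvoiding (G : SimpleGraph V) (c : Sym2 V → ℕ) (v y : V) (k : ℕ)
    (C : Set ℕ) : Prop :=
  ∃ p : G.Walk v y, p.IsPath ∧ p.length + 1 = k ∧ (p.edges.map c).Nodup ∧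
    ∀ e ∈ p.edges, c e ∉ C

/-- `σ_{v,X}(y)`: the number of colors `X`-separating `y` from `v`. -/
noncomputable def sepCount (G : SimpleGraph V) (c : Sym2 V → ℕ) (v : V) (X : Set V)
    (y : V) : ℕ :=
  Set.ncard {α : ℕ | ∃ x ∈ X, G.Adj x y ∧ c s(x, y) = α ∧ c s(v, x) ≠ α}

/-- `ρ_{v,X}(y)`: the number of colors restricted for `y` by `(v,X)`. -/
noncomputable def restrCount (G : SimpleGraph V) (c : Sym2 V → ℕ) (v : V) (X : Set V)
    (y : V) : ℕ :=
  Set.ncard {α : ℕ | (∃ x ∈ X, G.Adj x y ∧ c s(x, y) = α ∧ c s(v, x) ≠ α) ∧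
    ∀ w, G.Adj w y → w ∉ X → c s(w, y) ≠ α}

/-- The replication number `R(G,c) = max_{v,α} |N_α(v)|`. -/
noncomputable def repNum (G : SimpleGraph V) (c : Sym2 V → ℕ) : ℕ :=
  ⨆ v : V, ⨆ α : ℕ, Set.ncard {u : V | G.Adj u v ∧ c s(u, v) = α}

/-- `N_!(v)`: neighbors `u` of `v` whose color `c({u,v})` appears on exactly one edge at `v`. -/
def bangNbhd (G : SimpleGraph V) (c : Sym2 V → ℕ) (v : V) : Set V :=
  {u : V | G.Adj u v ∧ Set.ncard {w : V | G.Adj w v ∧ c s(w, v) = c s(u, v)} = 1}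

section RainbowPart
open scoped Classical

/-- A choice, at every vertex, of `d` neighbours with distinct colors. -/
structure TSys (G : SimpleGraph V) (c : Sym2 V → ℕ) (d : ℕ) (N : V → Finset V) : Prop where
  card : ∀ u, (N u).card = d
  adj : ∀ u, ∀ w ∈ N u, G.Adj u w
  inj : ∀ u, ∀ x ∈ N u, ∀ y ∈ N u, c s(u, x) = c s(u, y) → x = y

theorem exists_tsys [Fintype V] (G : SimpleGraph V) (c : Sym2 V → ℕ) :
    ∃ N, TSys G c (minColorDeg G c) N := by
  have key : ∀ u : V, ∃ S : Finset V, S.card = minColorDeg G c ∧ (∀ w ∈ S, G.Adj u w) ∧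
      (∀ x ∈ S, ∀ y ∈ S, c s(u, x) = c s(u, y) → x = y) := by
    intro u
    set T : Finset V := Finset.univ.filter (fun w => G.Adj u w)
    set I : Finset ℕ := T.image (fun w => c s(u, w))
    have hI : colorDeg G c u = I.card := by
      rw [colorDeg, ← Set.ncard_coe_finset]
      congr 1
      ext a
      simp only [Set.mem_ofPred_eq, I, T, Finset.coe_image, Set.mem_image, Finset.mem_coe,
        Finset.mem_filter, Finset.mem_univ, true_and]
      constructor
      · rintro ⟨w, h1, h2⟩
        exact ⟨w, h1.symm, by rw [Sym2.eq_swap]; exact h2⟩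
      · rintro ⟨w, h1, h2⟩
        exact ⟨w, h1.symm, by rw [Sym2.eq_swap]; exact h2⟩
    have hle : minColorDeg G c ≤ I.card := by
      rw [← hI]
      exact ciInf_le (OrderBot.bddBelow _) u
    obtain ⟨J, hJ, hJc⟩ := Finset.exists_subset_card_eq hle
    have hs : Set.SurjOn (fun w => c s(u, w)) (T : Set V) (J : Set ℕ) := by
      intro a ha
      have := hJ ha
      simpa [I] using this
    obtain ⟨S, hS, hinj, him⟩ := Finset.exists_subset_injOn_image_eq_of_surjOn (T : Set V) J hs
    refine ⟨S, ?_, ?_, ?_⟩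
    · rw [← hJc, ← him, Finset.card_image_of_injOn hinj]
    · intro w hw
      have := hS hw
      simpa [T] using this
    · intro x hx y hy h
      exact hinj hx hy h
  choose N h using key
  exact ⟨N, fun u => (h u).1, fun u => (h u).2.1, fun u => (h u).2.2⟩

theorem TSys.color_count {G : SimpleGraph V} {c : Sym2 V → ℕ} {d : ℕ} {N : V → Finset V}
    (h : TSys G c d N) (u : V) (F : Finset ℕ) :
    ((N u).filter (fun w => c s(u, w) ∈ F)).card ≤ F.card := by
  apply Finset.card_le_card_of_injOn (fun w => c s(u, w))
  · intro w hw
    simp only [Finset.coe_filter, Set.mem_ofPred_eq] at hw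
    exact hw.2
  · intro x hx y hy hxy
    simp only [Finset.coe_filter, Set.mem_ofPred_eq] at hx hy
    exact h.inj u x hx.1 y hy.1 hxy

/-- A rainbow path. -/
def Good {G : SimpleGraph V} (c : Sym2 V → ℕ) {u v : V} (p : G.Walk u v) : Prop :=
  p.IsPath ∧ (p.edges.map c).Nodup

/-- The vertices of a walk. -/
noncomputable def vs {G : SimpleGraph V} {u v : V} (p : G.Walk u v) : Finset V :=
  p.support.toFinset

/-- The colors of a walk. -/
noncomputable def cs {G : SimpleGraph V} (c : Sym2 V → ℕ) {u v : V} (p : G.Walk u v) : Finset ℕ :=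
  (p.edges.map c).toFinset

theorem vs_card {G : SimpleGraph V} {u v : V} (p : G.Walk u v) :
    (vs p).card ≤ p.length + 1 := by
  rw [← SimpleGraph.Walk.length_support]
  exact List.toFinset_card_le _

theorem cs_card {G : SimpleGraph V} {c : Sym2 V → ℕ} {u v : V} (p : G.Walk u v) :
    (cs c p).card ≤ p.length := by
  have := List.toFinset_card_le (p.edges.map c)
  simpa [cs] using this

theorem good_nil {G : SimpleGraph V} {c : Sym2 V → ℕ} (u : V) :
    Good c (SimpleGraph.Walk.nil : G.Walk u u) := by
  simp [Good]

theorem vs_nil {G : SimpleGraph V} (u : V) :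
    vs (SimpleGraph.Walk.nil : G.Walk u u) = {u} := by
  simp [vs]

theorem cs_nil {G : SimpleGraph V} {c : Sym2 V → ℕ} (u : V) :
    cs c (SimpleGraph.Walk.nil : G.Walk u u) = ∅ := by
  simp [cs]

theorem vs_cons {G : SimpleGraph V} {u v w : V} (h : G.Adj u v) (p : G.Walk v w) :
    vs (SimpleGraph.Walk.cons h p) = insert u (vs p) := by
  simp [vs]

theorem cs_cons {G : SimpleGraph V} {c : Sym2 V → ℕ} {u v w : V} (h : G.Adj u v)
    (p : G.Walk v w) :
    cs c (SimpleGraph.Walk.cons h p) = insert (c s(u, v)) (cs c p) := by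
  simp [cs]

theorem start_mem_vs {G : SimpleGraph V} {u v : V} (p : G.Walk u v) : u ∈ vs p := by
  simp [vs]

theorem end_mem_vs {G : SimpleGraph V} {u v : V} (p : G.Walk u v) : v ∈ vs p := by
  simp [vs]

theorem good_cons {G : SimpleGraph V} {c : Sym2 V → ℕ} {u v w : V} (h : G.Adj u v)
    {p : G.Walk v w} (hp : Good c p) (hu : u ∉ vs p) (hc : c s(u, v) ∉ cs c p) :
    Good c (SimpleGraph.Walk.cons h p) := by
  refine ⟨?_, ?_⟩
  · rw [SimpleGraph.Walk.cons_isPath_iff]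
    exact ⟨hp.1, by simpa [vs] using hu⟩
  · rw [SimpleGraph.Walk.edges_cons, List.map_cons, List.nodup_cons]
    exact ⟨by simpa [cs] using hc, hp.2⟩

theorem close_cycle {G : SimpleGraph V} {c : Sym2 V → ℕ} {e s x : V}
    {p : G.Walk e s} (hp : Good c p) (hes : e ≠ s) (hx : x ∉ vs p) (hxe : G.Adj x e)
    (hxs : G.Adj s x) (h1 : c s(x, e) ∉ cs c p) (h2 : c s(s, x) ∉ cs c p)
    (h3 : c s(s, x) ≠ c s(x, e)) : HasRainbowCycle G c (p.length + 2) := by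
  refine ⟨s, SimpleGraph.Walk.cons hxs (SimpleGraph.Walk.cons hxe p), ?_, by simp, ?_⟩
  · rw [SimpleGraph.Walk.cons_isCycle_iff]
    refine ⟨(good_cons hxe hp hx h1).1, ?_⟩
    rw [SimpleGraph.Walk.edges_cons, List.mem_cons]
    rintro (h | h)
    · exact h3 (by rw [h])
    · apply hx
      have := SimpleGraph.Walk.snd_mem_support_of_mem_edges p h
      simpa [vs] using this
  · rw [SimpleGraph.Walk.edges_cons, List.map_cons, List.nodup_cons]
    refine ⟨?_, (good_cons hxe hp hx h1).2⟩
    intro h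
    rw [SimpleGraph.Walk.edges_cons, List.map_cons, List.mem_cons] at h
    rcases h with h | h
    · exact h3 h
    · exact h2 (by simpa [cs] using h)

theorem TSys.bad_count {G : SimpleGraph V} {c : Sym2 V → ℕ} {d : ℕ} {N : V → Finset V}
    (h : TSys G c d N) (u : V) (W : Finset V) (F : Finset ℕ) :
    ((N u).filter (fun w => w ∈ W ∨ c s(u, w) ∈ F)).card ≤ W.card + F.card := by
  calc _ ≤ (W ∪ (N u).filter (fun w => c s(u, w) ∈ F)).card := by
        apply Finset.card_le_card
        intro x hx
        simp only [Finset.mem_filter, Finset.mem_union] at hx ⊢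
        tauto
    _ ≤ _ := (Finset.card_union_le _ _).trans (Nat.add_le_add_left (h.color_count u F) _)

/-- Extending a rainbow path greedily. -/
theorem TSys.pick {G : SimpleGraph V} {c : Sym2 V → ℕ} {d : ℕ} {N : V → Finset V}
    (h : TSys G c d N) (u : V) (W : Finset V) (F : Finset ℕ) (T : Finset V)
    (hT : W.card + F.card < (N u ∩ T).card) :
    ∃ x ∈ T, x ∈ N u ∧ x ∉ W ∧ c s(u, x) ∉ F := by
  by_contra hcon
  push Not at hcon
  have : N u ∩ T ⊆ (N u).filter (fun w => w ∈ W ∨ c s(u, w) ∈ F) := by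
    intro x hx
    simp only [Finset.mem_filter, Finset.mem_inter] at hx ⊢
    refine ⟨hx.1, ?_⟩
    by_cases hw : x ∈ W
    · exact Or.inl hw
    · exact Or.inr (hcon x hx.2 hx.1 hw)
  have := (Finset.card_le_card this).trans (h.bad_count u W F)
  omega

theorem TSys.ext_cycle {G : SimpleGraph V} {c : Sym2 V → ℕ} {d : ℕ} {N : V → Finset V}
    (h : TSys G c d N) (ℓ : ℕ) (hl : 3 ≤ ℓ) (P Q : Finset V)
    (hP : ∀ p ∈ P, 2 * ℓ < (N p ∩ Q).card)
    (hQ : ∀ q ∈ Q, 2 * ℓ < (N q ∩ P).card)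
    (hPP : ∀ s ∈ P, ∀ e ∈ P,
      3 * ℓ < ((N s ∩ N e).filter (fun x => s ∈ N x ∧ e ∈ N x)).card)
    (j : ℕ) : ∀ (e s : V) (p : G.Walk e s), Good c p → s ∈ P → p.length + 1 + j = ℓ - 1 →
      ((Even j ∧ e ∈ P) ∨ (Odd j ∧ e ∈ Q)) → HasRainbowCycle G c ℓ := by
  induction j with
  | zero =>
    intro e s p hp hs hlen hj
    have he : e ∈ P := by
      rcases hj with hj | hj
      · exact hj.2
      · exact absurd hj.1 (by decide)
    have hes : e ≠ s := by
      rintro rfl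
      have := hp.1
      rw [SimpleGraph.Walk.isPath_iff_nil] at this
      have := SimpleGraph.Walk.length_eq_zero_iff.mpr this
      omega
    have hv := vs_card p
    have hc := cs_card (c := c) p
    set X := (N s ∩ N e).filter (fun x => s ∈ N x ∧ e ∈ N x) with hX
    have : ∃ x ∈ X, x ∉ vs p ∧ c s(s, x) ∉ cs c p ∧ c s(e, x) ∉ cs c p := by
      by_contra hcon
      push Not at hcon
      have hsub : X ⊆ (N s).filter (fun w => w ∈ vs p ∨ c s(s, w) ∈ cs c p) ∪
          (N e).filter (fun w => c s(e, w) ∈ cs c p) := by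
        intro x hx
        have := hcon x hx
        simp only [hX, Finset.mem_filter, Finset.mem_inter, Finset.mem_union] at hx ⊢
        tauto
      have h1 := (Finset.card_le_card hsub).trans (Finset.card_union_le _ _)
      have h2 := h.bad_count s (vs p) (cs c p)
      have h3 := h.color_count e (cs c p)
      have h4 := hPP s hs e he
      rw [← hX] at h4
      omega
    obtain ⟨x, hx, hx1, hx2, hx3⟩ := this
    simp only [hX, Finset.mem_filter, Finset.mem_inter] at hx
    have hl2 : ℓ = p.length + 2 := by omega
    rw [hl2]
    refine close_cycle hp hes hx1 (h.adj x e hx.2.2) (h.adj s x hx.1.1) ?_ hx2 ?_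
    · rwa [Sym2.eq_swap]
    · intro heq
      apply hes
      symm
      apply h.inj x s hx.2.1 e hx.2.2
      rw [← heq, Sym2.eq_swap]
  | succ j ih =>
    intro e s p hp hs hlen hj
    have hv := vs_card p
    have hc := cs_card (c := c) p
    have step : ∀ T : Finset V, 2 * ℓ < (N e ∩ T).card →
        ∃ x ∈ T, ∃ q : G.Walk x s, Good c q ∧ q.length = p.length + 1 := by
      intro T hT
      obtain ⟨x, hxT, hxN, hxW, hxF⟩ := h.pick e (vs p) (cs c p) T (by omega)
      refine ⟨x, hxT, SimpleGraph.Walk.cons (h.adj e x hxN).symm p,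
        good_cons _ hp hxW (by rwa [Sym2.eq_swap]), by simp⟩
    rcases hj with ⟨hj, he⟩ | ⟨hj, he⟩
    · obtain ⟨x, hx, q, hq, hql⟩ := step Q (hP e he)
      refine ih x s q hq hs (by omega) (Or.inr ⟨?_, hx⟩)
      rw [Nat.even_add_one, Nat.not_even_iff_odd] at hj
      exact hj
    · obtain ⟨x, hx, q, hq, hql⟩ := step P (hQ e he)
      refine ih x s q hq hs (by omega) (Or.inl ⟨?_, hx⟩)
      rw [Nat.odd_add_one, Nat.not_odd_iff_even] at hj
      exact hj
end RainbowPart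
section RainbowPart
open scoped Classical

theorem markov_card (A : Finset V) (f : V → ℕ) (t : ℕ) :
    t * (A.filter (fun a => t < f a)).card ≤ ∑ a ∈ A, f a := by
  calc t * (A.filter (fun a => t < f a)).card = ∑ a ∈ A.filter (fun a => t < f a), t := by
        rw [Finset.sum_const, smul_eq_mul, mul_comm]
    _ ≤ ∑ a ∈ A.filter (fun a => t < f a), f a := by
        apply Finset.sum_le_sum
        intro a ha
        exact (Finset.mem_filter.mp ha).2.le
    _ ≤ _ := Finset.sum_le_sum_of_subset (Finset.filter_subset _ _)

theorem double_miss (A B : Finset V) (N : V → Finset V) :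
    ∑ a ∈ A, (B \ N a).card = ∑ b ∈ B, (A.filter (fun a => b ∉ N a)).card := by
  have := Finset.sum_card_bipartiteAbove_eq_sum_card_bipartiteBelow (s := A) (t := B)
    (fun a b => b ∉ N a)
  simp only [Finset.bipartiteAbove, Finset.bipartiteBelow] at this
  rw [← this]
  apply Finset.sum_congr rfl
  intro a _
  congr 1
  ext b
  simp

theorem count_four (B : Finset V) (N : V → Finset V) (s e : V) :
    B.card ≤ ((N s ∩ N e).filter (fun x => s ∈ N x ∧ e ∈ N x)).card +
      (B \ N s).card + (B \ N e).card + (B.filter (fun b => s ∉ N b)).card +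
      (B.filter (fun b => e ∉ N b)).card := by
  have hsub : B ⊆ (((((N s ∩ N e).filter (fun x => s ∈ N x ∧ e ∈ N x)) ∪ (B \ N s)) ∪ (B \ N e))
      ∪ (B.filter (fun b => s ∉ N b))) ∪ (B.filter (fun b => e ∉ N b)) := by
    intro x hx
    simp only [Finset.mem_union, Finset.mem_filter, Finset.mem_inter, Finset.mem_sdiff]
    tauto
  have h1 := Finset.card_le_card hsub
  have h2 := Finset.card_union_le (((((N s ∩ N e).filter (fun x => s ∈ N x ∧ e ∈ N x)) ∪ (B \ N s))
     ∪ (B \ N e)) ∪ (B.filter (fun b => s ∉ N b))) (B.filter (fun b => e ∉ N b))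
  have h3 := Finset.card_union_le ((((N s ∩ N e).filter (fun x => s ∈ N x ∧ e ∈ N x)) ∪ (B \ N s))
     ∪ (B \ N e)) (B.filter (fun b => s ∉ N b))
  have h4 := Finset.card_union_le (((N s ∩ N e).filter (fun x => s ∈ N x ∧ e ∈ N x)) ∪ (B \ N s))
     (B \ N e)
  have h5 := Finset.card_union_le ((N s ∩ N e).filter (fun x => s ∈ N x ∧ e ∈ N x)) (B \ N s)
  omega

theorem card_split (A B : Finset V) : (B \ A).card + (A ∩ B).card = B.card := by
  rw [Finset.inter_comm]
  exact Finset.card_sdiff_add_card_inter B A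

theorem TSys.dense_cycle {G : SimpleGraph V} {c : Sym2 V → ℕ} {d : ℕ} {N : V → Finset V}
    (h : TSys G c d N) (ℓ : ℕ) (hl : 3 ≤ ℓ) (Q : Finset V) (M w : ℕ)
    (hM : ∑ q ∈ Q, (Q \ N q).card ≤ M) (hw : 2 * w + 3 * ℓ < Q.card)
    (hw2 : 2 * M + w * (w + 2 * ℓ) < w * Q.card) : HasRainbowCycle G c ℓ := by
  set f : V → ℕ := fun q => (Q \ N q).card + (Q.filter (fun x => q ∉ N x)).card with hf
  have hsum : ∑ q ∈ Q, f q ≤ 2 * M := by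
    simp only [hf, Finset.sum_add_distrib]
    rw [← double_miss Q Q N]
    omega
  set P := Q.filter (fun q => ¬ w < f q) with hPdef
  have hcard : (Q.filter (fun q => w < f q)).card + P.card = Q.card :=
    Finset.card_filter_add_card_filter_not _
  have hmk := markov_card Q f w
  have hPlarge : w + 2 * ℓ < P.card := by
    have : w * (w + 2 * ℓ) < w * P.card := by
      have e1 : w * (Q.filter (fun q => w < f q)).card + w * P.card = w * Q.card := by
        rw [← hcard, mul_add]
      omega
    exact lt_of_mul_lt_mul_left this (Nat.zero_le _)
  have hPQ : P ⊆ Q := Finset.filter_subset _ _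
  have hfP : ∀ q ∈ P, f q ≤ w := by
    intro q hq
    exact not_lt.mp (Finset.mem_filter.mp hq).2
  have hPP1 : ∀ p ∈ P, 2 * ℓ < (N p ∩ P).card := by
    intro p hp
    have h1 := card_split (N p) P
    have h2 : (P \ N p).card ≤ (Q \ N p).card :=
      Finset.card_le_card (Finset.sdiff_subset_sdiff hPQ (le_refl _))
    have h3 := hfP p hp
    simp only [hf] at h3
    omega
  have hne : P.Nonempty := by
    rw [← Finset.card_pos]; omega
  obtain ⟨a, ha⟩ := hne
  refine h.ext_cycle ℓ hl P P hPP1 hPP1 ?_ (ℓ - 2) a a SimpleGraph.Walk.nil (good_nil a) ha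
    (by simp; omega) ?_
  · intro s hs e he
    have h1 := count_four Q N s e
    have h2 := hfP s hs
    have h3 := hfP e he
    simp only [hf] at h2 h3
    omega
  · rcases Nat.even_or_odd (ℓ - 2) with hh | hh
    · exact Or.inl ⟨hh, ha⟩
    · exact Or.inr ⟨hh, ha⟩
end RainbowPart
section RainbowPart
open scoped Classical

theorem TSys.grow {G : SimpleGraph V} {c : Sym2 V → ℕ} {d : ℕ} {N : V → Finset V}
    (h : TSys G c d N) {e s : V} (p : G.Walk e s) (hp : Good c p) (T : Finset V)
    (hT : 2 * p.length + 1 < (N e ∩ T).card) :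
    ∃ x ∈ T, ∃ q : G.Walk x s, Good c q ∧ q.length = p.length + 1 := by
  have hv := vs_card p
  have hc := cs_card (c := c) p
  obtain ⟨x, hxT, hxN, hxW, hxF⟩ := h.pick e (vs p) (cs c p) T (by omega)
  exact ⟨x, hxT, SimpleGraph.Walk.cons (h.adj e x hxN).symm p,
    good_cons _ hp hxW (by rwa [Sym2.eq_swap]), by simp⟩

theorem TSys.path_three {G : SimpleGraph V} {c : Sym2 V → ℕ} {d : ℕ} {N : V → Finset V}
    (h : TSys G c d N) (z : V) (S T : Finset V) (hS : 3 < (N z ∩ S).card)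
    (hT : 3 < (N z ∩ T).card) :
    ∃ s ∈ S, ∃ e ∈ T, ∃ q : G.Walk e s, Good c q ∧ q.length = 2 := by
  obtain ⟨s, hs, hsN, hsz, -⟩ := h.pick z {z} ∅ S (by simp; omega)
  have hzs := h.adj z s hsN
  obtain ⟨e, heT, heN, heW, heF⟩ := h.pick z {z, s} {c s(z, s)} T (by
    have := Finset.card_le_two (a := z) (b := s)
    simp only [Finset.card_singleton]
    omega)
  have hez := h.adj z e heN
  refine ⟨s, hs, e, heT, SimpleGraph.Walk.cons hez.symm
    (SimpleGraph.Walk.cons hzs SimpleGraph.Walk.nil), ?_, by simp⟩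
  apply good_cons
  · apply good_cons
    · exact good_nil s
    · simp [vs_nil]; exact hzs.ne
    · simp [cs_nil]
  · simpa [vs_cons, vs_nil] using heW
  · rw [Sym2.eq_swap]
    simpa [cs_cons, cs_nil] using heF

theorem TSys.path_four {G : SimpleGraph V} {c : Sym2 V → ℕ} {d : ℕ} {N : V → Finset V}
    (h : TSys G c d N) (z z2 : V) (hz : z2 ∈ N z) (T : Finset V) (hS : 5 < (N z ∩ T).card)
    (hT : 5 < (N z2 ∩ T).card) :
    ∃ s ∈ T, ∃ e ∈ T, ∃ q : G.Walk e s, Good c q ∧ q.length = 3 := by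
  have hzz := h.adj z z2 hz
  obtain ⟨s, hs, hsN, hsW, hsF⟩ := h.pick z {z, z2} {c s(z, z2)} T (by
    have := Finset.card_le_two (a := z) (b := z2)
    simp only [Finset.card_singleton]
    omega)
  have hzs := h.adj z s hsN
  simp only [Finset.mem_insert, Finset.mem_singleton, not_or] at hsW hsF
  have hg : Good c (SimpleGraph.Walk.cons hzz.symm
      (SimpleGraph.Walk.cons hzs SimpleGraph.Walk.nil)) := by
    apply good_cons
    · apply good_cons
      · exact good_nil s
      · simp [vs_nil]; exact hzs.ne
      · simp [cs_nil]
    · simp only [vs_cons, vs_nil, Finset.mem_insert, Finset.mem_singleton, not_or]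
      exact ⟨hzz.ne.symm, fun h => hsW.2 h.symm⟩
    · rw [Sym2.eq_swap]
      simp only [cs_cons, cs_nil, Finset.mem_insert, Finset.notMem_empty, or_false]
      exact fun h => hsF h.symm
  obtain ⟨e, he, q, hq, hql⟩ := h.grow _ hg T (by simpa using hT)
  exact ⟨s, hs, e, he, q, hq, by simpa using hql⟩

theorem TSys.finish {G : SimpleGraph V} {c : Sym2 V → ℕ} {d : ℕ} {N : V → Finset V}
    [Fintype V] (h : TSys G c d N) (ℓ : ℕ) (hl : 4 ≤ ℓ) (hn : Fintype.card V + 1 ≤ 2 * d)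
    (hd : 216 * ℓ + 1 ≤ d) (A B : Finset V) (hAB : Disjoint A B) (q mB : ℕ)
    (hq : (q = 100 * ℓ ∧ mB = 12 * ℓ) ∨ (q = 28 * ℓ ∧ mB = 32 * ℓ))
    (hA1 : d ≤ A.card + 6 * ℓ + q) (hA2 : A.card ≤ d + 2 * ℓ)
    (hB1 : d ≤ B.card + 2 * ℓ) (hB2 : B.card ≤ d + 2 * ℓ)
    (hA : ∀ a ∈ A, (B \ N a).card ≤ 4 * ℓ) (hB : ∀ b ∈ B, (A \ N b).card ≤ mB) :
    HasRainbowCycle G c ℓ := by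
  set A1 := A.filter (fun a => ¬ 100 * ℓ < (B.filter (fun b => a ∉ N b)).card) with hA1def
  set B1 := B.filter (fun b => ¬ 40 * ℓ < (A.filter (fun a => b ∉ N a)).card) with hB1def
  have hA1A : A1 ⊆ A := Finset.filter_subset _ _
  have hB1B : B1 ⊆ B := Finset.filter_subset _ _
  have hA1c : 100 * d ≤ 100 * A1.card + 100 * (6 * ℓ + q) +
      (if q = 100 * ℓ then 12 else 32) * (d + 2 * ℓ) := by
    have e1 : (A.filter (fun a => 100 * ℓ < (B.filter (fun b => a ∉ N b)).card)).card + A1.card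
        = A.card := Finset.card_filter_add_card_filter_not _
    have e2 := markov_card A (fun a => (B.filter (fun b => a ∉ N b)).card) (100 * ℓ)
    rw [← double_miss B A N] at e2
    have e3 : ∑ b ∈ B, (A \ N b).card ≤ B.card * mB := by
      rw [← smul_eq_mul]
      exact Finset.sum_le_card_nsmul _ _ _ hB
    set x := (A.filter (fun a => 100 * ℓ < (B.filter (fun b => a ∉ N b)).card)).card
    have e4 : ℓ * (100 * x) ≤ ℓ * ((if q = 100 * ℓ then 12 else 32) * (d + 2 * ℓ)) := by
      rcases hq with ⟨rfl, rfl⟩ | ⟨rfl, rfl⟩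
      · rw [if_pos rfl]
        nlinarith
      · rw [if_neg (by omega)]
        nlinarith
    have e5 := le_of_mul_le_mul_left e4 (by omega)
    omega
  have hB1c : 10 * d ≤ 10 * B1.card + 20 * ℓ + (d + 2 * ℓ) := by
    have e1 : (B.filter (fun b => 40 * ℓ < (A.filter (fun a => b ∉ N a)).card)).card + B1.card
        = B.card := Finset.card_filter_add_card_filter_not _
    have e2 := markov_card B (fun b => (A.filter (fun a => b ∉ N a)).card) (40 * ℓ)
    rw [← double_miss A B N] at e2
    have e3 : ∑ a ∈ A, (B \ N a).card ≤ A.card * (4 * ℓ) := by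
      rw [← smul_eq_mul]
      exact Finset.sum_le_card_nsmul _ _ _ hA
    set x := (B.filter (fun b => 40 * ℓ < (A.filter (fun a => b ∉ N a)).card)).card
    have e4 : ℓ * (10 * x) ≤ ℓ * (d + 2 * ℓ) := by
      nlinarith
    have e5 := le_of_mul_le_mul_left e4 (by omega)
    omega
  have hA1lo : 80 * ℓ ≤ A1.card ∧ mB + 70 * ℓ ≤ A1.card ∧
      d + 4 * ℓ + Fintype.card V < 2 * d + A1.card + B1.card ∧ 100 * ℓ ≤ B1.card ∧
      4 * ℓ + Fintype.card V < d + A1.card + B1.card ∧ 2 * mB + 83 * ℓ < A.card := by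
    rcases hq with ⟨rfl, rfl⟩ | ⟨rfl, rfl⟩
    · rw [if_pos rfl] at hA1c
      omega
    · rw [if_neg (by omega)] at hA1c
      omega
  obtain ⟨f1, f2, -, f3, f4, f5⟩ := hA1lo
  -- configuration one
  have c1P : ∀ p ∈ A1, 2 * ℓ < (N p ∩ B).card := by
    intro p hp
    have := card_split (N p) B
    have := hA p (hA1A hp)
    omega
  have c1Q : ∀ p ∈ B, 2 * ℓ < (N p ∩ A1).card := by
    intro p hp
    have h1 := card_split (N p) A1
    have h2 := hB p hp
    have h3 := Finset.card_le_card (Finset.sdiff_subset_sdiff hA1A (le_refl (N p)))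
    omega
  have c1PP : ∀ s ∈ A1, ∀ e ∈ A1,
      3 * ℓ < ((N s ∩ N e).filter (fun x => s ∈ N x ∧ e ∈ N x)).card := by
    intro s hs e he
    have h1 := count_four B N s e
    have h2 := hA s (hA1A hs)
    have h3 := hA e (hA1A he)
    have h4 := (Finset.mem_filter.mp hs).2
    have h5 := (Finset.mem_filter.mp he).2
    omega
  have c2P : ∀ p ∈ B1, 2 * ℓ < (N p ∩ A).card := by
    intro p hp
    have := card_split (N p) A
    have := hB p (hB1B hp)
    omega
  have c2Q : ∀ p ∈ A, 2 * ℓ < (N p ∩ B1).card := by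
    intro p hp
    have h1 := card_split (N p) B1
    have h2 := hA p hp
    have h3 := Finset.card_le_card (Finset.sdiff_subset_sdiff hB1B (le_refl (N p)))
    omega
  have c2PP : ∀ s ∈ B1, ∀ e ∈ B1,
      3 * ℓ < ((N s ∩ N e).filter (fun x => s ∈ N x ∧ e ∈ N x)).card := by
    intro s hs e he
    have h1 := count_four A N s e
    have h2 := hB s (hB1B hs)
    have h3 := hB e (hB1B he)
    have h4 := (Finset.mem_filter.mp hs).2
    have h5 := (Finset.mem_filter.mp he).2
    omega
  have ext1 := h.ext_cycle ℓ (by omega) A1 B c1P c1Q c1PP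
  have ext2 := h.ext_cycle ℓ (by omega) B1 A c2P c2Q c2PP
  have hA1ne : A1.Nonempty := by rw [← Finset.card_pos]; omega
  have hB1ne : B1.Nonempty := by rw [← Finset.card_pos]; omega
  obtain ⟨a0, ha0⟩ := hA1ne
  obtain ⟨b0, hb0⟩ := hB1ne
  rcases Nat.even_or_odd ℓ with hev | hod
  · refine ext1 (ℓ - 2) a0 a0 SimpleGraph.Walk.nil (good_nil a0) ha0 (by simp; omega)
      (Or.inl ⟨?_, ha0⟩)
    rw [Nat.even_sub (by omega)]
    simp [hev]
  · by_cases hboth : ∃ z, 2 * ℓ < (N z ∩ A1).card ∧ 2 * ℓ < (N z ∩ B1).card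
    · obtain ⟨z, hz1, hz2⟩ := hboth
      obtain ⟨s, hs, e, he, p, hp, hpl⟩ := h.path_three z A1 B1 (by omega) (by omega)
      refine ext1 (ℓ - 4) e s p hp hs (by omega) (Or.inr ⟨?_, hB1B he⟩)
      rw [Nat.odd_sub (by omega)]
      simp [hod]; decide
    · push Not at hboth
      set X := Finset.univ.filter (fun z => 2 * ℓ < (N z ∩ B1).card) with hX
      set Y := Finset.univ.filter (fun z => 2 * ℓ < (N z ∩ A1).card) with hY
      have hcov : ∀ z, z ∈ X ∨ z ∈ Y := by
        intro z
        by_contra hcon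
        simp only [hX, hY, Finset.mem_filter, Finset.mem_univ, true_and, not_or, not_lt] at hcon
        have hdis : Disjoint A1 B1 := Disjoint.mono hA1A hB1B hAB
        have k1 := Finset.card_union_of_disjoint hdis
        have k2 := card_split (N z) (A1 ∪ B1)
        have k3 : (N z ∩ (A1 ∪ B1)).card ≤ (N z ∩ A1).card + (N z ∩ B1).card := by
          rw [Finset.inter_union_distrib_left]
          exact Finset.card_union_le _ _
        have k4 : ((A1 ∪ B1) \ N z).card + (N z).card ≤ Fintype.card V := by
          rw [← Finset.card_union_of_disjoint Finset.sdiff_disjoint]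
          exact Finset.card_le_univ _
        rw [h.card z] at k4
        omega
      have hdj : Disjoint X Y := by
        rw [Finset.disjoint_left]
        intro z hz1 hz2
        simp only [hX, hY, Finset.mem_filter, Finset.mem_univ, true_and] at hz1 hz2
        have := hboth z hz2
        omega
      have hXY : X.card + Y.card ≤ Fintype.card V := by
        rw [← Finset.card_union_of_disjoint hdj]
        exact Finset.card_le_univ _
      have hex : ∀ z : V, ∀ T : Finset V, T.card < d → ∃ x ∈ N z, x ∉ T := by
        intro z T hT
        by_contra hcon
        push Not at hcon
        have := Finset.card_le_card (show N z ⊆ T from hcon)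
        rw [h.card z] at this
        omega
      have hpar : Even (ℓ - 5) := by
        have : 5 ≤ ℓ := by
          rcases hod with ⟨k, hk⟩
          omega
        rw [Nat.even_sub' this]
        simp [hod]; decide
      have h5 : 5 ≤ ℓ := by
        rcases hod with ⟨k, hk⟩
        omega
      rcases Nat.lt_or_ge Y.card d with hlt | hge
      · obtain ⟨z2, hz2, hz2Y⟩ := hex a0 Y hlt
        have hz2X := (hcov z2).resolve_right hz2Y
        simp only [hX, Finset.mem_filter, Finset.mem_univ, true_and] at hz2X
        have := c2Q a0 (hA1A ha0)
        obtain ⟨s, hs, e, he, p, hp, hpl⟩ := h.path_four a0 z2 hz2 B1 (by omega) (by omega)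
        exact ext2 (ℓ - 5) e s p hp hs (by omega) (Or.inl ⟨hpar, he⟩)
      · obtain ⟨z2, hz2, hz2X⟩ := hex b0 X (by omega)
        have hz2Y := (hcov z2).resolve_left hz2X
        simp only [hY, Finset.mem_filter, Finset.mem_univ, true_and] at hz2Y
        have := c1Q b0 (hB1B hb0)
        obtain ⟨s, hs, e, he, p, hp, hpl⟩ := h.path_four b0 z2 hz2 A1 (by omega) (by omega)
        exact ext1 (ℓ - 5) e s p hp hs (by omega) (Or.inl ⟨hpar, he⟩)
end RainbowPart
section RainbowPart
open scoped Classical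

/-- Number of colors at `v` on edges into `S`. -/
noncomputable def dcS (G : SimpleGraph V) (c : Sym2 V → ℕ) (S : Finset V) (v : V) : ℕ :=
  ((S.filter (fun u => G.Adj v u)).image (fun u => c s(v, u))).card

/-- Neighbours `u` of `v` such that the color of `uv` is unique at `u` within `S`. -/
noncomputable def uS (G : SimpleGraph V) (c : Sym2 V → ℕ) (S : Finset V) (v : V) : Finset V :=
  S.filter (fun u => G.Adj v u ∧ ∀ w ∈ S, G.Adj u w → c s(u, w) = c s(u, v) → w = v)

theorem dcS_erase (G : SimpleGraph V) (c : Sym2 V → ℕ) (S : Finset V) (v u : V) (hv : v ∈ S)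
    (hu : u ∈ S) :
    dcS G c S u ≤ dcS G c (S.erase v) u + (if u ∈ uS G c S v then 1 else 0) := by
  unfold dcS
  split_ifs with h
  · have : (S.filter (fun x => G.Adj u x)).image (fun x => c s(u, x)) ⊆
        insert (c s(u, v)) (((S.erase v).filter (fun x => G.Adj u x)).image
          (fun x => c s(u, x))) := by
      intro a ha
      simp only [Finset.mem_image, Finset.mem_filter, Finset.mem_insert, Finset.mem_erase] at ha ⊢
      obtain ⟨x, ⟨hx1, hx2⟩, rfl⟩ := ha
      by_cases hxv : x = v
      · left; rw [hxv]
      · right; exact ⟨x, ⟨⟨hxv, hx1⟩, hx2⟩, rfl⟩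
    exact (Finset.card_le_card this).trans (Finset.card_insert_le _ _)
  · rw [add_zero]
    apply Finset.card_le_card
    intro a ha
    simp only [Finset.mem_image, Finset.mem_filter, Finset.mem_erase] at ha ⊢
    obtain ⟨x, ⟨hx1, hx2⟩, rfl⟩ := ha
    by_cases hxv : x = v
    · subst hxv
      by_contra hcon
      apply h
      simp only [uS, Finset.mem_filter]
      refine ⟨hu, hx2.symm, ?_⟩
      intro w hw hadj hc
      by_contra hwx
      exact hcon ⟨w, ⟨⟨hwx, hw⟩, hadj⟩, hc⟩
    · exact ⟨x, ⟨⟨hxv, hx1⟩, hx2⟩, rfl⟩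

theorem phi_erase (G : SimpleGraph V) (c : Sym2 V → ℕ) (S : Finset V) (v : V) (hv : v ∈ S) :
    ∑ u ∈ S, dcS G c S u ≤ ∑ u ∈ S.erase v, dcS G c (S.erase v) u + dcS G c S v +
      (uS G c S v).card := by
  rw [← Finset.add_sum_erase S _ hv]
  have h1 : ∑ u ∈ S.erase v, dcS G c S u ≤ ∑ u ∈ S.erase v, (dcS G c (S.erase v) u +
      (if u ∈ uS G c S v then 1 else 0)) := by
    apply Finset.sum_le_sum
    intro u hu
    exact dcS_erase G c S v u hv (Finset.mem_of_mem_erase hu)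
  rw [Finset.sum_add_distrib] at h1
  have h2 : ∑ u ∈ S.erase v, (if u ∈ uS G c S v then 1 else 0) ≤ (uS G c S v).card := by
    rw [← Finset.card_filter]
    apply Finset.card_le_card
    intro u hu
    exact (Finset.mem_filter.mp hu).2
  omega

theorem dcS_le (G : SimpleGraph V) (c : Sym2 V → ℕ) (S : Finset V) (v : V) :
    dcS G c S v + (uS G c S v).card ≤ (S.filter (fun u => G.Adj v u)).card +
      ((uS G c S v).image (fun u => c s(v, u))).card := by
  have hU : uS G c S v ⊆ S.filter (fun u => G.Adj v u) := by
    intro u hu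
    simp only [uS, Finset.mem_filter] at hu ⊢
    exact ⟨hu.1, hu.2.1⟩
  have h1 := Finset.card_sdiff_add_card_eq_card hU
  have h2 : dcS G c S v ≤ ((uS G c S v).image (fun u => c s(v, u))).card +
      ((S.filter (fun u => G.Adj v u)) \ uS G c S v).card := by
    unfold dcS
    rw [← Finset.union_sdiff_of_subset hU, Finset.image_union]
    refine (Finset.card_union_le _ _).trans ?_
    rw [Finset.union_sdiff_of_subset hU]
    exact Nat.add_le_add_left Finset.card_image_le _
  omega

theorem rainbow_triangle {G : SimpleGraph V} {c : Sym2 V → ℕ} {d : ℕ} {N : V → Finset V}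
    [Fintype V] (h : TSys G c d N) (hn : Fintype.card V + 1 ≤ 2 * d) (hpos : 0 < Fintype.card V) :
    HasRainbowCycle G c 3 := by
  set FF : Finset (Finset V) := Finset.univ.filter (fun S => S.Nonempty ∧
    S.card * (S.card + 1) ≤ 2 * ∑ u ∈ S, dcS G c S u) with hFF
  have huniv : Finset.univ ∈ FF := by
    simp only [hFF, Finset.mem_filter, Finset.mem_univ, true_and]
    refine ⟨Finset.card_pos.mp (by simpa using hpos), ?_⟩
    have : ∀ u ∈ (Finset.univ : Finset V), d ≤ dcS G c Finset.univ u := by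
      intro u _
      rw [← h.card u]
      have hinj : Set.InjOn (fun x => c s(u, x)) (N u : Set V) := by
        intro x hx y hy hxy
        exact h.inj u x hx y hy hxy
      rw [← Finset.card_image_of_injOn hinj]
      apply Finset.card_le_card
      apply Finset.image_subset_image
      intro x hx
      simp [h.adj u x hx]
    have h2 := Finset.card_nsmul_le_sum _ _ _ this
    rw [smul_eq_mul, Finset.card_univ] at h2
    rw [Finset.card_univ]
    nlinarith
  obtain ⟨S, hS, hmin⟩ := Finset.exists_min_image FF Finset.card ⟨_, huniv⟩
  have hS' := hS
  simp only [hFF, Finset.mem_filter, Finset.mem_univ, true_and] at hS'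
  obtain ⟨hne, hΦ⟩ := hS'
  have hdeg : ∀ v ∈ S, (S.filter (fun u => G.Adj v u)).card + 1 ≤ S.card := by
    intro v hv
    have : S.filter (fun u => G.Adj v u) ⊆ S.erase v := by
      intro u hu
      simp only [Finset.mem_filter, Finset.mem_erase] at hu ⊢
      exact ⟨hu.2.ne.symm, hu.1⟩
    have := Finset.card_le_card this
    rw [Finset.card_erase_of_mem hv] at this
    have : 0 < S.card := Finset.card_pos.mpr hne
    omega
  have hloss : ∀ v ∈ S, S.card + 1 ≤ (S.filter (fun u => G.Adj v u)).card +
      ((uS G c S v).image (fun u => c s(v, u))).card := by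
    intro v hv
    refine le_trans ?_ (dcS_le G c S v)
    have h1 := phi_erase G c S v hv
    have hce := Finset.card_erase_of_mem hv
    by_cases hne2 : (S.erase v).Nonempty
    · have hnot : S.erase v ∉ FF := by
        intro hcon
        have := hmin _ hcon
        have : 0 < S.card := Finset.card_pos.mpr hne
        omega
      have hlt : 2 * ∑ u ∈ S.erase v, dcS G c (S.erase v) u <
          (S.erase v).card * ((S.erase v).card + 1) := by
        by_contra hcon
        apply hnot
        simp only [hFF, Finset.mem_filter, Finset.mem_univ, true_and]
        exact ⟨hne2, not_lt.mp hcon⟩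
      obtain ⟨m, hm⟩ : ∃ m, S.card = m + 1 :=
        ⟨S.card - 1, by have : 0 < S.card := Finset.card_pos.mpr hne
                        omega⟩
      rw [hm] at hΦ hce ⊢
      rw [hce] at hlt
      simp only [Nat.add_sub_cancel] at hlt
      nlinarith
    · rw [Finset.not_nonempty_iff_eq_empty] at hne2
      have hSv : S = {v} := by
        rw [← Finset.insert_erase hv, hne2]; rfl
      exfalso
      rw [hSv] at hΦ
      simp [dcS, Finset.filter_singleton] at hΦ
  obtain ⟨v, hv, hmax⟩ := Finset.exists_max_image S
    (fun v => ((uS G c S v).image (fun u => c s(v, u))).card) hne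
  obtain ⟨T, hT, hTinj, hTim⟩ := Finset.exists_subset_injOn_image_eq_of_surjOn
    (f := fun u => c s(v, u)) (uS G c S v : Set V)
    ((uS G c S v).image (fun u => c s(v, u))) (by
      intro a ha
      simpa using ha)
  have hTc : T.card = ((uS G c S v).image (fun u => c s(v, u))).card := by
    rw [← hTim, Finset.card_image_of_injOn hTinj]
  have h1 := hloss v hv
  have h2 := hdeg v hv
  have hTne : T.Nonempty := by
    rw [← Finset.card_pos]; omega
  obtain ⟨x, hx⟩ := hTne
  have hTU : ∀ y ∈ T, y ∈ S ∧ G.Adj v y ∧ ∀ w ∈ S, G.Adj y w → c s(y, w) = c s(y, v) → w = v := by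
    intro y hy
    have := hT hy
    simpa [uS] using this
  by_cases hadj : ∃ y ∈ T, G.Adj x y
  · obtain ⟨y, hy, hxy⟩ := hadj
    obtain ⟨hxS, hvx, hxu⟩ := hTU x hx
    obtain ⟨hyS, hvy, hyu⟩ := hTU y hy
    have e1 : c s(v, x) ≠ c s(v, y) := by
      intro heq
      exact hxy.ne (hTinj hx hy heq)
    have e2 : c s(x, y) ≠ c s(x, v) := fun heq => hvy.ne (hxu y hyS hxy heq).symm
    have e3 : c s(y, x) ≠ c s(y, v) := fun heq => hvx.ne (hyu x hxS hxy.symm heq).symm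
    have hg : Good c (SimpleGraph.Walk.cons hvx.symm (SimpleGraph.Walk.nil : G.Walk v v)) := by
      apply good_cons
      · exact good_nil v
      · simp [vs_nil]; exact hvx.ne.symm
      · simp [cs_nil]
    refine close_cycle hg hvx.ne.symm (x := y) ?_ hxy.symm hvy ?_ ?_ ?_
    · simp only [vs_cons, vs_nil, Finset.mem_insert, Finset.mem_singleton, not_or]
      exact ⟨hxy.ne.symm, hvy.ne.symm⟩
    · simp only [cs_cons, cs_nil, Finset.mem_insert, Finset.notMem_empty, or_false]
      rw [Sym2.eq_swap]; exact e2
    · simp only [cs_cons, cs_nil, Finset.mem_insert, Finset.notMem_empty, or_false]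
      rw [Sym2.eq_swap (a := x)]
      exact e1.symm
    · rw [Sym2.eq_swap (a := v)]
      exact e3.symm
  · exfalso
    push Not at hadj
    have hdis : Disjoint (S.filter (fun u => G.Adj x u)) T := by
      rw [Finset.disjoint_left]
      intro y hy hyT
      exact hadj y hyT (Finset.mem_filter.mp hy).2
    have hsub : S.filter (fun u => G.Adj x u) ∪ T ⊆ S := by
      apply Finset.union_subset (Finset.filter_subset _ _)
      intro y hy
      exact (hTU y hy).1
    have h3 := Finset.card_le_card hsub
    rw [Finset.card_union_of_disjoint hdis] at h3
    have h4 := hloss x (hTU x hx).1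
    have h5 := hmax x (hTU x hx).1
    omega
end RainbowPart
section RainbowPart
open scoped Classical

/-- The neighbours of `u` joined to it by color `a`. -/
noncomputable def starF [Fintype V] (G : SimpleGraph V) (c : Sym2 V → ℕ) (u : V) (a : ℕ) :
    Finset V := Finset.univ.filter (fun w => G.Adj u w ∧ c s(u, w) = a)

/-- End vertices of rainbow paths from `v` on `k` vertices avoiding color `α`. -/
noncomputable def endF [Fintype V] (G : SimpleGraph V) (c : Sym2 V → ℕ) (v : V) (α : ℕ)
    (k : ℕ) : Finset V := Finset.univ.filter (fun u => ∃ p : G.Walk u v, Good c p ∧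
      p.length + 1 = k ∧ α ∉ cs c p)

/-- The number of non-separating vertices of `N v` for `y`. -/
noncomputable def nsep (G : SimpleGraph V) (c : Sym2 V → ℕ) (N : V → Finset V) (v y : V) : ℕ :=
  ((N v).filter (fun x => G.Adj x y ∧ c s(x, y) = c s(v, x))).card

theorem exists_max_star [Fintype V] [Nonempty V] (G : SimpleGraph V) (c : Sym2 V → ℕ) :
    ∃ v α, ∀ x a, (starF G c x a).card ≤ (starF G c v α).card := by
  obtain ⟨⟨v, w⟩, -, hmax⟩ := Finset.exists_max_image (Finset.univ : Finset (V × V))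
    (fun q => (starF G c q.1 (c s(q.1, q.2))).card) Finset.univ_nonempty
  refine ⟨v, c s(v, w), ?_⟩
  intro x a
  rcases (starF G c x a).eq_empty_or_nonempty with h | ⟨y, hy⟩
  · rw [h]; simp
  · have hy2 : c s(x, y) = a := (Finset.mem_filter.mp hy).2.2
    rw [← hy2]
    exact hmax (x, y) (Finset.mem_univ _)

theorem TSys.endF_step {G : SimpleGraph V} {c : Sym2 V → ℕ} {d : ℕ} {N : V → Finset V}
    [Fintype V] (h : TSys G c d N) (v : V) (α k : ℕ) (u : V) (hu : u ∈ endF G c v α k) :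
    (N u \ endF G c v α (k + 1)).card ≤ 2 * k := by
  obtain ⟨p, hp, hlen, hα⟩ := (Finset.mem_filter.mp hu).2
  have hsub : N u \ endF G c v α (k + 1) ⊆
      (N u).filter (fun w => w ∈ vs p ∨ c s(u, w) ∈ insert α (cs c p)) := by
    intro w hw
    rw [Finset.mem_sdiff] at hw
    rw [Finset.mem_filter]
    refine ⟨hw.1, ?_⟩
    by_contra hcon
    simp only [Finset.mem_insert, not_or] at hcon
    apply hw.2
    simp only [endF, Finset.mem_filter, Finset.mem_univ, true_and]
    refine ⟨SimpleGraph.Walk.cons (h.adj u w hw.1).symm p, ?_, by simp; omega, ?_⟩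
    · exact good_cons _ hp hcon.1 (by rw [Sym2.eq_swap]; exact hcon.2.2)
    · rw [cs_cons, Finset.mem_insert, not_or, Sym2.eq_swap]
      exact ⟨fun e => hcon.2.1 e.symm, hα⟩
  have h1 := (Finset.card_le_card hsub).trans (h.bad_count u _ _)
  have h2 := vs_card p
  have h3 := cs_card (c := c) p
  have h4 := Finset.card_insert_le α (cs c p)
  omega

theorem TSys.endF_ne {G : SimpleGraph V} {c : Sym2 V → ℕ} {d : ℕ} {N : V → Finset V}
    [Fintype V] (h : TSys G c d N) (v : V) (α k : ℕ) (hk : 2 * k < d) :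
    (endF G c v α (k + 1)).Nonempty := by
  induction k with
  | zero =>
    refine ⟨v, ?_⟩
    simp only [endF, Finset.mem_filter, Finset.mem_univ, true_and]
    exact ⟨SimpleGraph.Walk.nil, good_nil v, by simp, by simp [cs_nil]⟩
  | succ k ih =>
    obtain ⟨u, hu⟩ := ih (by omega)
    have h1 := h.endF_step v α (k + 1) u hu
    have h2 := card_split (endF G c v α (k + 1 + 1)) (N u)
    rw [h.card u] at h2
    have h3 : 0 < (endF G c v α (k + 1 + 1) ∩ N u).card := by omega
    obtain ⟨x, hx⟩ := Finset.card_pos.mp h3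
    exact ⟨x, (Finset.mem_inter.mp hx).1⟩

theorem TSys.endF_card {G : SimpleGraph V} {c : Sym2 V → ℕ} {d : ℕ} {N : V → Finset V}
    [Fintype V] (h : TSys G c d N) (v : V) (α k : ℕ) (hk : 2 * k < d) :
    d ≤ (endF G c v α (k + 2)).card + 2 * (k + 1) := by
  change d ≤ (endF G c v α (k + 1 + 1)).card + 2 * (k + 1)
  obtain ⟨u, hu⟩ := h.endF_ne v α k hk
  have h1 := h.endF_step v α (k + 1) u hu
  have h2 := card_split (endF G c v α (k + 1 + 1)) (N u)
  rw [h.card u] at h2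
  have h3 := Finset.card_le_card (Finset.inter_subset_left :
    (endF G c v α (k + 1 + 1) ∩ N u) ⊆ _)
  omega

theorem TSys.sep_bound {G : SimpleGraph V} {c : Sym2 V → ℕ} {d : ℕ} {N : V → Finset V}
    [Fintype V] (h : TSys G c d N) (ℓ : ℕ) (hl : 4 ≤ ℓ) (hno : ¬ HasRainbowCycle G c ℓ)
    (v : V) (α : ℕ) (y : V) (hy : y ∈ endF G c v α (ℓ - 1)) :
    (N y ∩ (N v ∪ starF G c v α)).card + 4 ≤ nsep G c N v y + 3 * ℓ := by
  obtain ⟨p, hp, hlen, hα⟩ := (Finset.mem_filter.mp hy).2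
  have hyv : y ≠ v := by
    rintro rfl
    have := hp.1
    rw [SimpleGraph.Walk.isPath_iff_nil] at this
    have := SimpleGraph.Walk.length_eq_zero_iff.mpr this
    omega
  have hsub : N y ∩ (N v ∪ starF G c v α) ⊆
      ((N v).filter (fun x => G.Adj x y ∧ c s(x, y) = c s(v, x)) ∪
      (N y).filter (fun w => w ∈ vs p ∨ c s(y, w) ∈ insert α (cs c p))) ∪
      (N v).filter (fun w => c s(v, w) ∈ cs c p) := by
    intro x hx
    rw [Finset.mem_inter] at hx
    have hyx := h.adj y x hx.1
    by_contra hcon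
    simp only [Finset.mem_union, Finset.mem_filter, not_or, not_and, Finset.mem_insert] at hcon
    obtain ⟨⟨c1, c2⟩, c3⟩ := hcon
    have c2 := c2 hx.1
    apply hno
    have hl2 : ℓ = p.length + 2 := by omega
    rw [hl2]
    have hc1 : c s(x, y) ∉ cs c p := by rw [Sym2.eq_swap]; exact c2.2.2
    rcases Finset.mem_union.mp hx.2 with hxN | hxL
    · exact close_cycle hp hyv c2.1 hyx.symm (h.adj v x hxN) hc1 (c3 hxN)
        (fun e => c1 hxN hyx.symm e.symm)
    · simp only [starF, Finset.mem_filter, Finset.mem_univ, true_and] at hxL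
      refine close_cycle hp hyv c2.1 hyx.symm hxL.1 hc1 ?_ ?_
      · rw [hxL.2]; exact hα
      · rw [hxL.2, Sym2.eq_swap]; exact fun e => c2.2.1 e.symm
  have h0 := Finset.card_le_card hsub
  have h1 := Finset.card_union_le
    ((N v).filter (fun x => G.Adj x y ∧ c s(x, y) = c s(v, x)) ∪
      (N y).filter (fun w => w ∈ vs p ∨ c s(y, w) ∈ insert α (cs c p)))
    ((N v).filter (fun w => c s(v, w) ∈ cs c p))
  have h1b := Finset.card_union_le
    ((N v).filter (fun x => G.Adj x y ∧ c s(x, y) = c s(v, x)))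
      ((N y).filter (fun w => w ∈ vs p ∨ c s(y, w) ∈ insert α (cs c p)))
  have h2 := vs_card p
  have h3 := cs_card (c := c) p
  have h4 := Finset.card_insert_le α (cs c p)
  have h5 := h.bad_count y (vs p) (insert α (cs c p))
  have h6 := h.color_count v (cs c p)
  unfold nsep
  omega

theorem TSys.D_card {G : SimpleGraph V} {c : Sym2 V → ℕ} {d : ℕ} {N : V → Finset V}
    [Fintype V] (h : TSys G c d N) (v : V) (α : ℕ) :
    d + (starF G c v α).card ≤ (N v ∪ starF G c v α).card + 1 := by
  have h1 := Finset.card_union_add_card_inter (N v) (starF G c v α)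
  have h2 : (N v ∩ starF G c v α).card ≤ 1 := by
    rw [Finset.card_le_one]
    intro a ha b hb
    simp only [starF, Finset.mem_inter, Finset.mem_filter, Finset.mem_univ, true_and] at ha hb
    exact h.inj v a ha.1 b hb.1 (ha.2.2.trans hb.2.2.symm)
  rw [h.card v] at h1
  omega

theorem TSys.sum_nsep {G : SimpleGraph V} {c : Sym2 V → ℕ} {d : ℕ} {N : V → Finset V}
    (h : TSys G c d N) (v : V) (Y : Finset V) :
    ∑ y ∈ Y, nsep G c N v y =
      ∑ x ∈ N v, (Y.filter (fun y => G.Adj x y ∧ c s(x, y) = c s(v, x))).card := by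
  have := Finset.sum_card_bipartiteAbove_eq_sum_card_bipartiteBelow (s := Y) (t := N v)
    (fun y x => G.Adj x y ∧ c s(x, y) = c s(v, x))
  simp only [Finset.bipartiteAbove, Finset.bipartiteBelow] at this
  unfold nsep
  exact this

theorem TSys.sum_nsep_le {G : SimpleGraph V} {c : Sym2 V → ℕ} {d : ℕ} {N : V → Finset V}
    [Fintype V] (h : TSys G c d N) (v : V) (R : ℕ) (hR : ∀ x a, (starF G c x a).card ≤ R)
    (Y : Finset V) : ∑ y ∈ Y, nsep G c N v y ≤ d * R := by
  rw [h.sum_nsep v Y, ← h.card v, ← smul_eq_mul]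
  apply Finset.sum_le_card_nsmul
  intro x _
  refine le_trans (Finset.card_le_card ?_) (hR x (c s(v, x)))
  intro y hy
  simp only [starF, Finset.mem_filter, Finset.mem_univ, true_and] at hy ⊢
  exact hy.2
end RainbowPart
section RainbowPart
open scoped Classical

theorem TSys.factF {G : SimpleGraph V} {c : Sym2 V → ℕ} {d : ℕ} {N : V → Finset V}
    [Fintype V] (h : TSys G c d N) (ℓ : ℕ) (hl : 4 ≤ ℓ) (hn : Fintype.card V + 1 ≤ 2 * d)
    (hno : ¬ HasRainbowCycle G c ℓ)
    (v : V) (α : ℕ) (Z : Finset V) (hZ : Z = Finset.univ \ (N v ∪ starF G c v α)) (y : V)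
    (hy : y ∈ endF G c v α (ℓ - 1)) :
    (Z \ N y).card + (starF G c v α).card + 4 ≤ nsep G c N v y + 3 * ℓ ∧
      d + 4 ≤ (N y ∩ Z).card + nsep G c N v y + 3 * ℓ := by
  have h1 := h.sep_bound ℓ hl hno v α y hy
  have h2 := h.D_card v α
  have h3 := Finset.card_sdiff_add_card_eq_card (Finset.subset_univ (N v ∪ starF G c v α))
  rw [← hZ, Finset.card_univ] at h3
  have h4 := card_split (N y) Z
  have h5 : d ≤ (N y ∩ Z).card + (N y ∩ (N v ∪ starF G c v α)).card := by
    rw [← h.card y]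
    have : N y ⊆ (N y ∩ Z) ∪ (N y ∩ (N v ∪ starF G c v α)) := by
      intro x hx
      rw [hZ]
      simp only [Finset.mem_union, Finset.mem_inter, Finset.mem_sdiff, Finset.mem_univ, true_and]
      tauto
    exact (Finset.card_le_card this).trans (Finset.card_union_le _ _)
  omega

theorem TSys.case_five {G : SimpleGraph V} {c : Sym2 V → ℕ} {d : ℕ} {N : V → Finset V}
    [Fintype V] (h : TSys G c d N) (ℓ : ℕ) (hl : 5 ≤ ℓ) (hn : Fintype.card V + 1 ≤ 2 * d)
    (hd : 216 * ℓ + 1 ≤ d) (v : V) (α R : ℕ) (hRe : R = (starF G c v α).card)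
    (hR : ∀ x a, (starF G c x a).card ≤ R) : HasRainbowCycle G c ℓ := by
  by_contra hno
  obtain ⟨m, rfl⟩ : ∃ m, ℓ = m + 5 := ⟨ℓ - 5, by omega⟩
  set ℓ := m + 5 with hℓ
  set Y := endF G c v α (m + 2 + 2) with hY
  set H := endF G c v α (m + 1 + 2) with hH
  set S := endF G c v α (m + 2) with hS
  have hYc : d ≤ Y.card + 2 * ℓ := by
    have : d ≤ Y.card + _ := h.endF_card v α (m + 2) (by omega)
    omega
  have hHc : d ≤ H.card + 2 * ℓ := by
    have : d ≤ H.card + _ := h.endF_card v α (m + 1) (by omega)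
    omega
  have hSc : d ≤ S.card + 2 * ℓ := by
    have : d ≤ S.card + _ := h.endF_card v α m (by omega)
    omega
  have hHY : ∀ u ∈ H, (N u \ Y).card ≤ 2 * ℓ := by
    intro u hu
    have : (N u \ Y).card ≤ _ := h.endF_step v α (m + 1 + 2) u hu
    omega
  have hSH : ∀ u ∈ S, (N u \ H).card ≤ 2 * ℓ := by
    intro u hu
    have : (N u \ H).card ≤ _ := h.endF_step v α (m + 2) u hu
    omega
  obtain ⟨Z, hZ⟩ : ∃ Z, Z = Finset.univ \ (N v ∪ starF G c v α) := ⟨_, rfl⟩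
  have hF : ∀ y ∈ Y, (Z \ N y).card + R ≤ nsep G c N v y + 3 * ℓ ∧
      d ≤ (N y ∩ Z).card + nsep G c N v y + 3 * ℓ := by
    intro y hy
    have := h.factF ℓ (by omega) hn hno v α Z hZ y hy
    omega
  have hsum : ∀ Y0 : Finset V, ∑ y ∈ Y0, nsep G c N v y ≤ d * R := h.sum_nsep_le v R hR
  have hcu : ∀ T : Finset V, T.card ≤ Fintype.card V := fun T => Finset.card_le_univ T
  have hHYi := Finset.card_union_add_card_inter H Y
  have hmiss : ∀ u ∈ H, d ≤ (N u ∩ Y).card + 2 * ℓ := by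
    intro u hu
    have h1 := hHY u hu
    have h2 := card_split Y (N u)
    rw [Finset.inter_comm, h.card] at h2
    omega
  have hmissS : ∀ u ∈ S, d ≤ (N u ∩ H).card + 2 * ℓ := by
    intro u hu
    have h1 := hSH u hu
    have h2 := card_split H (N u)
    rw [Finset.inter_comm, h.card] at h2
    omega
  have main : ∃ q mB, ((q = 100 * ℓ ∧ mB = 12 * ℓ) ∨ (q = 28 * ℓ ∧ mB = 32 * ℓ)) ∧
      (H ∩ Y).card ≤ q ∧ ∀ u ∈ H, (Y \ N u).card ≤ mB := by
    by_cases hreg : d ≤ 3 * R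
    · refine ⟨100 * ℓ, 12 * ℓ, Or.inl ⟨rfl, rfl⟩, ?_⟩
      have hYu : Y.card ≤ d + 10 * ℓ := by
        have h1 : Y.card * R ≤ ∑ y ∈ Y, (nsep G c N v y + 3 * ℓ) := by
          rw [← smul_eq_mul]
          apply Finset.card_nsmul_le_sum
          intro y hy
          have := (hF y hy).1
          omega
        rw [Finset.sum_add_distrib, Finset.sum_const, smul_eq_mul] at h1
        have h2 := hsum Y
        by_contra hcon
        push Not at hcon
        obtain ⟨r, hr⟩ : ∃ r, R = r + 3 * ℓ := ⟨R - 3 * ℓ, by omega⟩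
        have h3 : Y.card * r ≤ d * r + d * (3 * ℓ) := by
          rw [hr] at h1 h2
          nlinarith
        have h4 : (d + 10 * ℓ) * r ≤ Y.card * r := Nat.mul_le_mul_right _ (by omega)
        have h5 : ℓ * (10 * r) ≤ ℓ * (3 * d) := by nlinarith
        have h6 := le_of_mul_le_mul_left h5 (by omega)
        omega
      have hmB : ∀ u ∈ H, (Y \ N u).card ≤ 12 * ℓ := by
        intro u hu
        have h1 := hmiss u hu
        have h2 := card_split (N u) Y
        omega
      refine ⟨?_, hmB⟩
      by_contra hcon
      push Not at hcon
      apply hno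
      refine h.dense_cycle ℓ (by omega) (H ∩ Y) ((H ∩ Y).card * (12 * ℓ)) (48 * ℓ) ?_ ?_ ?_
      · rw [← smul_eq_mul]
        apply Finset.sum_le_card_nsmul
        intro x hx
        refine le_trans (Finset.card_le_card ?_) (hmB x (Finset.mem_inter.mp hx).1)
        exact Finset.sdiff_subset_sdiff Finset.inter_subset_right (le_refl _)
      · omega
      · have h0 : 0 < ℓ := by omega
        nlinarith
    · refine ⟨28 * ℓ, 32 * ℓ, Or.inr ⟨rfl, rfl⟩, ?_⟩
      push Not at hreg
      have hbig : ∀ u ∈ H ∩ Y, 3 * d ≤ 5 * nsep G c N v u + 25 * ℓ := by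
        intro u hu
        rw [Finset.mem_inter] at hu
        have hQ : 5 * (N u ∩ Y ∩ Z).card < 2 * d := by
          by_contra hcon
          push Not at hcon
          apply hno
          have hY0 := hmiss u hu.1
          have hY0' : (N u ∩ Y).card ≤ d := by
            rw [← h.card u]; exact Finset.card_le_card Finset.inter_subset_left
          refine h.dense_cycle ℓ (by omega) (N u ∩ Y ∩ Z) (2 * ℓ * R + 3 * ℓ * d) (41 * ℓ)
            ?_ (by omega) ?_
          · have h1 : ∑ y ∈ N u ∩ Y ∩ Z, ((N u ∩ Y ∩ Z) \ N y).card ≤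
                ∑ y ∈ N u ∩ Y, (Z \ N y).card := by
              refine le_trans (Finset.sum_le_sum ?_)
                (Finset.sum_le_sum_of_subset Finset.inter_subset_left)
              intro y _
              exact Finset.card_le_card
                (Finset.sdiff_subset_sdiff Finset.inter_subset_right (le_refl _))
            have h2 : ∑ y ∈ N u ∩ Y, ((Z \ N y).card + R) ≤
                ∑ y ∈ N u ∩ Y, (nsep G c N v y + 3 * ℓ) := by
              apply Finset.sum_le_sum
              intro y hy
              exact (hF y (Finset.mem_inter.mp hy).2).1
            rw [Finset.sum_add_distrib, Finset.sum_add_distrib, Finset.sum_const,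
              Finset.sum_const, smul_eq_mul, smul_eq_mul] at h2
            have h3 := hsum (N u ∩ Y)
            have h4 : d * R ≤ ((N u ∩ Y).card + 2 * ℓ) * R := Nat.mul_le_mul_right _ hY0
            have h5 : (N u ∩ Y).card * (3 * ℓ) ≤ d * (3 * ℓ) := Nat.mul_le_mul_right _ hY0'
            nlinarith
          · have h1 : ℓ * (3 * R) ≤ ℓ * d := Nat.mul_le_mul_left _ hreg.le
            have h2 : ℓ * (2 * d) ≤ ℓ * (5 * (N u ∩ Y ∩ Z).card) := Nat.mul_le_mul_left _ hcon
            have h3 : ℓ * (216 * ℓ) < ℓ * d := Nat.mul_lt_mul_of_pos_left (by omega) (by omega)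
            nlinarith
        have h1 := (hF u hu.2).2
        have h2 : (N u ∩ Z).card ≤ (N u ∩ Y ∩ Z).card + (N u \ Y).card := by
          refine le_trans (Finset.card_le_card ?_) (Finset.card_union_le _ _)
          intro x hx
          simp only [Finset.mem_union, Finset.mem_inter, Finset.mem_sdiff] at hx ⊢
          tauto
        have h3 := hHY u hu.1
        omega
      have hq : (H ∩ Y).card ≤ 28 * ℓ := by
        by_contra hcon
        push Not at hcon
        have h1 : ∑ y ∈ Y, (15 * R + (if y ∈ H then 4 * d - 30 * ℓ else 0)) ≤
            ∑ y ∈ Y, 15 * (nsep G c N v y + 3 * ℓ) := by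
          apply Finset.sum_le_sum
          intro y hy
          split_ifs with hyH
          · have := hbig y (Finset.mem_inter.mpr ⟨hyH, hy⟩)
            omega
          · have := (hF y hy).1
            omega
        have h1a : ∑ y ∈ Y, (15 * R + (if y ∈ H then 4 * d - 30 * ℓ else 0)) =
            Y.card * (15 * R) + (Y.filter (fun y => y ∈ H)).card * (4 * d - 30 * ℓ) := by
          rw [Finset.sum_add_distrib, Finset.sum_const, smul_eq_mul, ← Finset.sum_filter,
            Finset.sum_const, smul_eq_mul]
        have h1b : ∑ y ∈ Y, 15 * (nsep G c N v y + 3 * ℓ) =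
            15 * (∑ y ∈ Y, nsep G c N v y + Y.card * (3 * ℓ)) := by
          rw [← Finset.mul_sum, Finset.sum_add_distrib, Finset.sum_const, smul_eq_mul]
        rw [h1a, h1b] at h1
        have h2 : (Y.filter (fun y => y ∈ H)).card = (H ∩ Y).card := by
          congr 1
          ext x
          rw [Finset.mem_filter, Finset.mem_inter, and_comm]
        rw [h2] at h1
        have h3 := hsum Y
        have h4 : d * R ≤ (Y.card + 2 * ℓ) * R := Nat.mul_le_mul_right _ hYc
        have h5 : Y.card * (3 * ℓ) ≤ (2 * d) * (3 * ℓ) :=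
          Nat.mul_le_mul_right _ (by have := hcu Y; omega)
        obtain ⟨t, ht⟩ : ∃ t, t + 30 * ℓ = 4 * d := ⟨4 * d - 30 * ℓ, by omega⟩
        have ht2 : 4 * d - 30 * ℓ = t := by omega
        rw [ht2] at h1
        have h6 : (28 * ℓ) * t ≤ (H ∩ Y).card * t := Nat.mul_le_mul_right _ hcon.le
        have h7 : ℓ * (3 * R) ≤ ℓ * d := Nat.mul_le_mul_left _ hreg.le
        have h8 : ℓ * (28 * t) ≤ ℓ * (100 * d) := by nlinarith
        have h9 := le_of_mul_le_mul_left h8 (by omega)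
        omega
      refine ⟨hq, ?_⟩
      intro u hu
      have h1 := hmiss u hu
      have h2 := card_split (N u) Y
      have h3 := hcu (H ∪ Y)
      omega
  obtain ⟨q, mB, hqm, hq, hmB⟩ := main
  have hq100 : q ≤ 100 * ℓ := by omega
  have hdis : Disjoint S H := by
    rw [Finset.disjoint_left]
    intro u huS huH
    have h1 := hSH u huS
    have h2 := hHY u huH
    have h3 : (N u).card ≤ (N u \ H).card + (N u \ Y).card + (H ∩ Y).card := by
      refine le_trans (Finset.card_le_card ?_) ((Finset.card_union_le ((N u \ H) ∪ (N u \ Y))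
        (H ∩ Y)).trans (Nat.add_le_add_right (Finset.card_union_le _ _) _))
      intro x hx
      simp only [Finset.mem_union, Finset.mem_inter, Finset.mem_sdiff]
      tauto
    rw [h.card] at h3
    omega
  have hSHc := Finset.card_union_of_disjoint hdis
  have hSHn := hcu (S ∪ H)
  have hYS := Finset.card_union_add_card_inter Y S
  have hYSH := Finset.card_union_add_card_inter (Y ∪ S) H
  have hYSHn := hcu (Y ∪ S ∪ H)
  have hYSHi : ((Y ∪ S) ∩ H).card ≤ (H ∩ Y).card := by
    apply Finset.card_le_card
    intro x hx
    rw [Finset.mem_inter, Finset.mem_union] at hx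
    rw [Finset.mem_inter]
    rcases hx with ⟨hx | hx, hxH⟩
    · exact ⟨hxH, hx⟩
    · exact absurd hxH (Finset.disjoint_left.mp hdis hx)
  have hAS := Finset.card_le_card (Finset.inter_subset_right : Y ∩ S ⊆ S)
  apply hno
  refine h.finish ℓ (by omega) hn hd (Y ∩ S) H
    (Disjoint.mono_left Finset.inter_subset_right hdis) q mB hqm (by omega) (by omega)
    hHc (by omega) ?_ ?_
  · intro a ha
    have h1 := hmissS a (Finset.mem_inter.mp ha).2
    have h2 := card_split (N a) H
    omega
  · intro b hb
    exact le_trans (Finset.card_le_card (Finset.sdiff_subset_sdiff Finset.inter_subset_left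
      (le_refl _))) (hmB b hb)
end RainbowPart
section RainbowPart
open scoped Classical

theorem TSys.case_four {G : SimpleGraph V} {c : Sym2 V → ℕ} {d : ℕ} {N : V → Finset V}
    [Fintype V] (h : TSys G c d N) (hn : Fintype.card V + 1 ≤ 2 * d)
    (hd : 865 ≤ d) (v : V) (α R : ℕ) (hRe : R = (starF G c v α).card)
    (hR : ∀ x a, (starF G c x a).card ≤ R) : HasRainbowCycle G c 4 := by
  by_contra hno
  obtain ⟨Y, hY⟩ : ∃ Y, Y = endF G c v α 3 := ⟨_, rfl⟩
  have hYc : d ≤ Y.card + 4 := by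
    rw [hY]
    exact h.endF_card v α 1 (by omega)
  have hYn : Y.card ≤ Fintype.card V := Finset.card_le_univ _
  have hF : ∀ y ∈ Y, R ≤ nsep G c N v y + 8 := by
    intro y hy
    rw [hY] at hy
    have := h.factF 4 (le_refl _) hn hno v α _ rfl y hy
    omega
  obtain ⟨X, hX⟩ : ∃ X, X = (N v).filter (fun x => ¬ c s(v, x) ∈ ({α} : Finset ℕ)) := ⟨_, rfl⟩
  have hXc : ((N v).filter (fun x => c s(v, x) ∈ ({α} : Finset ℕ))).card + X.card = d := by
    rw [hX, ← h.card v]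
    exact Finset.card_filter_add_card_filter_not _
  have hX1 := h.color_count v {α}
  rw [Finset.card_singleton] at hX1
  -- each `x` in `X` sees many `y` in `Y` with a separating color
  have hlow : ∀ x ∈ X, d ≤ (Y.filter (fun y => G.Adj x y ∧ c s(x, y) ≠ c s(v, x))).card + 3 := by
    intro x hx
    rw [hX, Finset.mem_filter, Finset.mem_singleton] at hx
    have hvx := h.adj v x hx.1
    have h1 := h.bad_count x {v} {c s(v, x), α}
    have h2 := Finset.card_le_two (a := c s(v, x)) (b := α)
    have h3 : ((N x).filter (fun w => w ∈ ({v} : Finset V) ∨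
        c s(x, w) ∈ ({c s(v, x), α} : Finset ℕ))).card + ((N x).filter (fun w =>
        ¬ (w ∈ ({v} : Finset V) ∨ c s(x, w) ∈ ({c s(v, x), α} : Finset ℕ)))).card = d := by
      rw [← h.card x]
      exact Finset.card_filter_add_card_filter_not _
    have h4 : (N x).filter (fun w =>
        ¬ (w ∈ ({v} : Finset V) ∨ c s(x, w) ∈ ({c s(v, x), α} : Finset ℕ))) ⊆
        Y.filter (fun y => G.Adj x y ∧ c s(x, y) ≠ c s(v, x)) := by
      intro y hy
      simp only [Finset.mem_filter, Finset.mem_singleton, Finset.mem_insert, not_or] at hy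
      obtain ⟨hy1, hy2, hy3, hy4⟩ := hy
      have hxy := h.adj x y hy1
      rw [Finset.mem_filter]
      refine ⟨?_, hxy, hy3⟩
      rw [hY]
      simp only [endF, Finset.mem_filter, Finset.mem_univ, true_and]
      refine ⟨SimpleGraph.Walk.cons hxy.symm (SimpleGraph.Walk.cons hvx.symm
        SimpleGraph.Walk.nil), ?_, by simp, ?_⟩
      · apply good_cons
        · apply good_cons
          · exact good_nil v
          · simp [vs_nil]; exact hvx.ne.symm
          · simp [cs_nil]
        · simp only [vs_cons, vs_nil, Finset.mem_insert, Finset.mem_singleton, not_or]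
          exact ⟨hxy.ne.symm, hy2⟩
        · simp only [cs_cons, cs_nil, Finset.mem_insert, Finset.notMem_empty, or_false]
          rw [Sym2.eq_swap (a := y), Sym2.eq_swap (a := x) (b := v)]
          exact hy3
      · simp only [cs_cons, cs_nil, Finset.mem_insert, Finset.notMem_empty, or_false, not_or]
        rw [Sym2.eq_swap (a := y), Sym2.eq_swap (a := x) (b := v)]
        exact ⟨fun e => hy4 e.symm, fun e => hx.2 e.symm⟩
    have h5 := Finset.card_le_card h4
    rw [Finset.card_singleton] at h1
    omega
  have hup : ∀ y ∈ Y, (X.filter (fun x => G.Adj x y ∧ c s(x, y) ≠ c s(v, x))).card ≤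
      2 * R + 5 := by
    intro y hy
    rw [hY] at hy
    obtain ⟨p, hp, hlen, hα⟩ := (Finset.mem_filter.mp hy).2
    have hyv : y ≠ v := by
      rintro rfl
      have := hp.1
      rw [SimpleGraph.Walk.isPath_iff_nil] at this
      have := SimpleGraph.Walk.length_eq_zero_iff.mpr this
      omega
    have hsub : X.filter (fun x => G.Adj x y ∧ c s(x, y) ≠ c s(v, x)) ⊆
        ((N v).filter (fun w => w ∈ vs p ∨ c s(v, w) ∈ cs c p)) ∪
        (cs c p).biUnion (fun a => starF G c y a) := by
      intro x hx
      rw [Finset.mem_filter] at hx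
      obtain ⟨hxX, hxy, hxc⟩ := hx
      rw [hX] at hxX
      have hxN := (Finset.mem_filter.mp hxX).1
      by_contra hcon
      simp only [Finset.mem_union, Finset.mem_filter, Finset.mem_biUnion, starF, Finset.mem_univ,
        true_and, not_or, not_and, not_exists] at hcon
      obtain ⟨c1, c2⟩ := hcon
      have c1 := c1 hxN
      apply hno
      have h4 : 4 = p.length + 2 := by omega
      rw [h4]
      refine close_cycle hp hyv c1.1 hxy (h.adj v x hxN) ?_ c1.2 hxc.symm
      intro hmem
      exact c2 _ hmem hxy.symm (by rw [Sym2.eq_swap])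
    have h1 := (Finset.card_le_card hsub).trans (Finset.card_union_le _ _)
    have h2 := h.bad_count v (vs p) (cs c p)
    have h3 := vs_card p
    have h4 := cs_card (c := c) p
    have h5 : ((cs c p).biUnion (fun a => starF G c y a)).card ≤ (cs c p).card * R :=
      Finset.card_biUnion_le_card_mul _ _ _ (fun a _ => hR y a)
    have h6 : (cs c p).card * R ≤ 2 * R := Nat.mul_le_mul_right _ (by omega)
    omega
  have hcount : X.card * (d - 3) ≤ Y.card * (2 * R + 5) := by
    have e1 := Finset.sum_card_bipartiteAbove_eq_sum_card_bipartiteBelow (s := X) (t := Y)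
      (fun x y => G.Adj x y ∧ c s(x, y) ≠ c s(v, x))
    simp only [Finset.bipartiteAbove, Finset.bipartiteBelow] at e1
    have e2 : X.card * (d - 3) ≤
        ∑ x ∈ X, (Y.filter (fun y => G.Adj x y ∧ c s(x, y) ≠ c s(v, x))).card := by
      rw [← smul_eq_mul]
      apply Finset.card_nsmul_le_sum
      intro x hx
      have := hlow x hx
      omega
    have e3 : ∑ y ∈ Y, (X.filter (fun x => G.Adj x y ∧ c s(x, y) ≠ c s(v, x))).card ≤
        Y.card * (2 * R + 5) := by
      rw [← smul_eq_mul (a := Y.card)]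
      exact Finset.sum_le_card_nsmul _ _ _ hup
    exact e2.trans (e1.le.trans e3)
  have hR1 : d ≤ 4 * R + 14 := by
    have e1 : (d - 1) * (d - 3) ≤ X.card * (d - 3) := Nat.mul_le_mul_right _ (by omega)
    have e2 : Y.card * (2 * R + 5) ≤ (2 * d) * (2 * R + 5) := Nat.mul_le_mul_right _ (by omega)
    have e3 : d * (d - 4) ≤ (d - 1) * (d - 3) := by
      obtain ⟨t, rfl⟩ : ∃ t, d = t + 4 := ⟨d - 4, by omega⟩
      simp only [Nat.add_sub_cancel, show t + 4 - 1 = t + 3 by omega,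
        show t + 4 - 3 = t + 1 by omega]
      nlinarith
    have e4 : d * (d - 4) ≤ d * (2 * (2 * R + 5)) := by
      calc d * (d - 4) ≤ (2 * d) * (2 * R + 5) := by omega
        _ = d * (2 * (2 * R + 5)) := by ring
    have e5 := le_of_mul_le_mul_left e4 (by omega)
    omega
  have hsumlo : Y.card * R ≤ ∑ y ∈ Y, nsep G c N v y + Y.card * 8 := by
    have : Y.card * R ≤ ∑ y ∈ Y, (nsep G c N v y + 8) := by
      rw [← smul_eq_mul]
      exact Finset.card_nsmul_le_sum _ _ _ hF
    rwa [Finset.sum_add_distrib, Finset.sum_const, smul_eq_mul] at this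
  have hsum1 := h.sum_nsep_le v R hR Y
  have hYu : Y.card ≤ d + 34 := by
    by_contra hcon
    push Not at hcon
    obtain ⟨r, hr⟩ : ∃ r, R = r + 8 := ⟨R - 8, by omega⟩
    have e1 : (d + 35) * r ≤ Y.card * r := Nat.mul_le_mul_right _ hcon
    have e2 : Y.card * r ≤ d * r + d * 8 := by
      rw [hr] at hsumlo hsum1
      nlinarith
    have e3 : 35 * r ≤ 8 * d := by nlinarith
    omega
  have hsum2 : ∑ y ∈ Y, nsep G c N v y ≤ d * 37 + R := by
    rw [h.sum_nsep v Y]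
    rw [← Finset.sum_filter_add_sum_filter_not (N v)
      (fun x => c s(v, x) ∈ ({α} : Finset ℕ)), ← hX, add_comm]
    apply Nat.add_le_add
    · have e1 : ∑ x ∈ X, (Y.filter (fun y => G.Adj x y ∧ c s(x, y) = c s(v, x))).card ≤
          X.card * 37 := by
        rw [← smul_eq_mul]
        apply Finset.sum_le_card_nsmul
        intro x hx
        have k1 := hlow x hx
        have k2 : (Y.filter (fun y => G.Adj x y ∧ c s(x, y) = c s(v, x))).card +
            (Y.filter (fun y => G.Adj x y ∧ c s(x, y) ≠ c s(v, x))).card ≤ Y.card := by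
          rw [← Finset.card_union_of_disjoint]
          · apply Finset.card_le_card
            exact Finset.union_subset (Finset.filter_subset _ _) (Finset.filter_subset _ _)
          · rw [Finset.disjoint_left]
            intro y hy1 hy2
            exact (Finset.mem_filter.mp hy2).2.2 (Finset.mem_filter.mp hy1).2.2
        omega
      exact e1.trans (Nat.mul_le_mul_right _ (by omega))
    · refine le_trans (Finset.sum_le_card_nsmul _ _ R ?_) ?_
      · intro x _
        refine le_trans (Finset.card_le_card ?_) (hR x (c s(v, x)))
        intro y hy
        simp only [starF, Finset.mem_filter, Finset.mem_univ, true_and] at hy ⊢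
        exact hy.2
      · rw [smul_eq_mul]
        exact (Nat.mul_le_mul_right R hX1).trans (by omega)
  have f1 : Y.card * R ≤ d * 37 + R + (d + 34) * 8 := by
    have := Nat.mul_le_mul_right 8 hYu
    omega
  have f2 : (d - 4) * R ≤ Y.card * R := Nat.mul_le_mul_right _ (by omega)
  obtain ⟨t, ht⟩ : ∃ t, d = t + 5 := ⟨d - 5, by omega⟩
  have f3 : (d - 4) * R = t * R + R := by
    rw [show d - 4 = t + 1 by omega]; ring
  have f4 : t * 200 ≤ t * R := Nat.mul_le_mul_left _ (by omega)
  omega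
end RainbowPart

theorem stmt9 (ℓ : ℕ) (hl : 3 ≤ ℓ) [Fintype V] (G : SimpleGraph V) (c : Sym2 V → ℕ)
    (hn : 432 * ℓ < Fintype.card V)
    (hδ : ((Fintype.card V : ℚ) + 1) / 2 ≤ (minColorDeg G c : ℚ)) :
    HasRainbowCycle G c ℓ := by
  obtain ⟨N, h⟩ := exists_tsys G c
  have hn2 : Fintype.card V + 1 ≤ 2 * minColorDeg G c := by
    have h1 : ((Fintype.card V : ℚ) + 1) ≤ 2 * (minColorDeg G c : ℚ) := by linarith
    exact_mod_cast h1
  have hpos : 0 < Fintype.card V := by omega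
  haveI : Nonempty V := Fintype.card_pos_iff.mp hpos
  rcases Nat.lt_or_ge ℓ 4 with h3 | h4
  · have : ℓ = 3 := by omega
    rw [this]
    exact rainbow_triangle h hn2 hpos
  · obtain ⟨v, α, hmax⟩ := exists_max_star G c
    rcases Nat.lt_or_ge ℓ 5 with h5 | h5
    · have : ℓ = 4 := by omega
      subst this
      exact h.case_four hn2 (by omega) v α _ rfl hmax
    · exact h.case_five ℓ h5 hn2 (by omega) v α _ rfl hmax
end

section
/- Fix ℓ ≥ 3. Let (G,c) be an n-vertex edge-colored graph with no rainbow ℓ-cycle and let A ⊆ V(G). Then there exists a vertex a ∈ A whose number of distinct colors on edges into A (i.e., deg^c of a in the induced edge-colored subgraph G[A]) is at most |A|/2 + 3ℓ. -/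
open Finset

variable {V : Type*}

/-- colors at v -/
noncomputable def colSet [Fintype V] (G : SimpleGraph V) (c : Sym2 V → ℕ) (v : V) : Finset ℕ := by
  classical exact (univ.filter (fun u => G.Adj v u)).image (fun u => c s(v, u))

theorem mem_colSet [Fintype V] (G : SimpleGraph V) (c : Sym2 V → ℕ) (v : V) (b : ℕ) :
    b ∈ colSet G c v ↔ ∃ u, G.Adj v u ∧ c s(v, u) = b := by
  simp [colSet]

/-- rainbow path of length k from v to w avoiding S -/
def RP (G : SimpleGraph V) (c : Sym2 V → ℕ) (S : Finset ℕ) (v : V) (k : ℕ) (w : V) : Prop :=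
  ∃ p : G.Walk v w, p.IsPath ∧ p.length = k ∧ (p.edges.map c).Nodup ∧ ∀ e ∈ p.edges, c e ∉ S

theorem RP_succ [Fintype V] [DecidableEq V] (G : SimpleGraph V) (c : Sym2 V → ℕ) (S : Finset ℕ)
    (v : V) (k : ℕ) (z : V) (h : RP G c S v k z) (Y : Finset V)
    (hY : ∀ w, RP G c S v (k+1) w → w ∈ Y) :
    #(colSet G c z) ≤ #Y + #S + 2 * k + 1 := by
  obtain ⟨p, hp, hlen, hnd, hS⟩ := h
  have hsub : colSet G c z ⊆ (Y.image (fun u => c s(z, u)) ∪ S) ∪ (p.edges.map c).toFinset ∪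
      p.support.toFinset.image (fun u => c s(z, u)) := by
    intro b hb
    obtain ⟨u, hu, rfl⟩ := (mem_colSet _ _ _ _).1 hb
    by_contra hcon
    simp only [mem_union, not_or] at hcon
    obtain ⟨⟨⟨h1, h2⟩, h3⟩, h4⟩ := hcon
    apply h1
    refine mem_image_of_mem (fun u => c s(z, u)) (hY u ?_)
    have hus : u ∉ p.support := fun h => h4 (mem_image_of_mem (fun u => c s(z, u)) (by simpa using h))
    refine ⟨p.concat hu, hp.concat hus hu, by simp [hlen], ?_, ?_⟩
    · rw [SimpleGraph.Walk.edges_concat, List.concat_eq_append, List.map_append, List.nodup_append]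
      refine ⟨hnd, by simp, ?_⟩
      intro a ha b hb hab
      simp only [List.map_cons, List.map_nil, List.mem_singleton] at hb
      apply h3
      rw [List.mem_toFinset, ← hb, ← hab]
      exact ha
    · intro e he
      rw [SimpleGraph.Walk.edges_concat, List.concat_eq_append, List.mem_append] at he
      rcases he with he | he
      · exact hS e he
      · simp only [List.mem_singleton] at he
        subst he
        exact h2
  have h1 := card_le_card hsub
  have h2 : #(p.edges.map c).toFinset ≤ k := by
    refine (List.toFinset_card_le _).trans ?_
    simp [hlen]
  have h3 : #(p.support.toFinset.image (fun u => c s(z, u))) ≤ k + 1 := by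
    refine card_image_le.trans ((List.toFinset_card_le _).trans ?_)
    simp [hlen]
  have h4 : #(Y.image (fun u => c s(z, u))) ≤ #Y := card_image_le
  have h5 := card_union_le (Y.image (fun u => c s(z, u)) ∪ S ∪ (p.edges.map c).toFinset)
    (p.support.toFinset.image (fun u => c s(z, u)))
  have h6 := card_union_le (Y.image (fun u => c s(z, u)) ∪ S) (p.edges.map c).toFinset
  have h7 := card_union_le (Y.image (fun u => c s(z, u))) S
  omega

theorem RP_exists [Fintype V] [DecidableEq V] (G : SimpleGraph V) (c : Sym2 V → ℕ) (S : Finset ℕ)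
    (v : V) (δ : ℕ) (hδ : ∀ z, δ ≤ #(colSet G c z)) (k : ℕ) (hk : #S + 2 * k + 1 < δ) :
    ∃ z, RP G c S v k z := by
  classical
  induction k with
  | zero => exact ⟨v, SimpleGraph.Walk.nil, by simp, by simp, by simp, by simp⟩
  | succ k ih =>
    obtain ⟨z, hz⟩ := ih (by omega)
    have := RP_succ G c S v k z hz (univ.filter (fun w => RP G c S v (k+1) w)) (by simp)
    have h2 := hδ z
    have : 0 < #(univ.filter (fun w => RP G c S v (k+1) w)) := by omega
    obtain ⟨w, hw⟩ := card_pos.1 this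
    exact ⟨w, by simpa using hw⟩

theorem close_cycle_s15 (G : SimpleGraph V) (c : Sym2 V → ℕ) (v y w : V) (p : G.Walk v y)
    (hp : p.IsPath) (hnd : (p.edges.map c).Nodup) (hw : w ∉ p.support)
    (hvw : G.Adj w v) (hyw : G.Adj y w) (h1 : c s(y, w) ∉ p.edges.map c)
    (h2 : c s(w, v) ∉ p.edges.map c) (h3 : c s(y, w) ≠ c s(w, v)) :
    HasRainbowCycle G c (p.length + 2) := by
  have key : ((SimpleGraph.Walk.cons hvw (p.concat hyw)).edges.map c).Nodup := by
    rw [SimpleGraph.Walk.edges_cons, SimpleGraph.Walk.edges_concat, List.concat_eq_append,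
      List.map_cons, List.map_append, List.nodup_cons, List.nodup_append]
    refine ⟨?_, hnd, by simp, ?_⟩
    · rw [List.mem_append, not_or]
      refine ⟨h2, ?_⟩
      simpa using fun h => h3 h.symm
    · intro a ha b hb hab
      simp only [List.map_cons, List.map_nil, List.mem_singleton] at hb
      apply h1
      rw [← hb, ← hab]; exact ha
  refine ⟨w, SimpleGraph.Walk.cons hvw (p.concat hyw), ?_, by simp, key⟩
  rw [SimpleGraph.Walk.cons_isCycle_iff]
  refine ⟨hp.concat hw hyw, ?_⟩
  intro hmem
  rw [SimpleGraph.Walk.edges_cons, List.map_cons, List.nodup_cons] at key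
  exact key.1 (List.mem_map_of_mem hmem)

/-- out-degree count -/
theorem arcs_count [Fintype V] [DecidableEq V] (G : SimpleGraph V) (c : Sym2 V → ℕ) (S : Finset ℕ)
    (v y : V) (k : ℕ) (h : RP G c S v k y) (hno : ¬ HasRainbowCycle G c (k + 2))
    (N : Finset V) (hN : ∀ w, w ∈ N ↔ G.Adj v w)
    (hS : ∀ w w', G.Adj v w → G.Adj v w' → c s(v, w) = c s(v, w') → c s(v, w) ∉ S → w = w')
    (B : Finset V) (hB : ∀ w, G.Adj v w → G.Adj y w → c s(y, w) = c s(v, w) → w ∈ B) :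
    #(colSet G c y) + #N ≤ Fintype.card V + #B + 3 * k + 1 := by
  obtain ⟨p, hp, hlen, hnd, hpS⟩ := h
  set F : Finset V := N.filter (fun w => c s(v, w) ∈ p.edges.map c) with hF
  have hFc : #F ≤ k := by
    have : #F ≤ #(p.edges.map c).toFinset := by
      refine card_le_card_of_injOn (fun w => c s(v, w)) ?_ ?_
      · intro w hw
        have hw' : w ∈ F := hw
        rw [hF, mem_filter] at hw'
        simpa using hw'.2
      · intro w hw w' hw' heq
        have hw1 : w ∈ F := hw
        have hw2 : w' ∈ F := hw'
        rw [hF, mem_filter, hN] at hw1 hw2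
        refine hS w w' hw1.1 hw2.1 heq ?_
        obtain ⟨e, he, hec⟩ := List.mem_map.1 hw1.2
        rw [← hec]
        exact hpS e he
    refine this.trans ((List.toFinset_card_le _).trans ?_)
    simp [hlen]
  have hsub : colSet G c y ⊆ (p.edges.map c).toFinset ∪
      ((p.support.toFinset ∪ Nᶜ) ∪ (F ∪ B)).image (fun u => c s(y, u)) := by
    intro b hb
    obtain ⟨u, hu, rfl⟩ := (mem_colSet _ _ _ _).1 hb
    by_contra hcon
    rw [mem_union, not_or] at hcon
    obtain ⟨h1, h2⟩ := hcon
    have h3 : u ∉ ((p.support.toFinset ∪ Nᶜ) ∪ (F ∪ B)) := fun h =>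
      h2 (mem_image_of_mem (fun u => c s(y, u)) h)
    simp only [mem_union, not_or, mem_compl, not_not, List.mem_toFinset] at h3
    obtain ⟨⟨ha, hb'⟩, hf, hbb⟩ := h3
    have hvu := (hN u).1 hb'
    apply hno
    rw [← hlen]
    refine close_cycle_s15 G c v y u p hp hnd ha hvu.symm hu (by simpa using h1) ?_ ?_
    · intro h
      apply hf
      rw [hF, mem_filter]
      exact ⟨hb', by rwa [Sym2.eq_swap]⟩
    · intro h
      exact hbb (hB u hvu hu (by rw [h, Sym2.eq_swap]))
  have e1 := card_le_card hsub
  have e2 : #(p.edges.map c).toFinset ≤ k := by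
    refine (List.toFinset_card_le _).trans ?_
    simp [hlen]
  have e3 : #(p.support.toFinset) ≤ k + 1 := by
    refine (List.toFinset_card_le _).trans ?_
    simp [hlen]
  have e4 := card_union_le (p.edges.map c).toFinset
    (((p.support.toFinset ∪ Nᶜ) ∪ (F ∪ B)).image (fun u => c s(y, u)))
  have e5 : #(((p.support.toFinset ∪ Nᶜ) ∪ (F ∪ B)).image (fun u => c s(y, u))) ≤ _ :=
    card_image_le
  have e6 := card_union_le (p.support.toFinset ∪ Nᶜ) (F ∪ B)
  have e7 := card_union_le p.support.toFinset Nᶜ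
  have e8 := card_union_le F B
  have e9 := card_add_card_compl N
  omega

set_option maxHeartbeats 2000000 in
theorem core_min [Fintype V] [Nonempty V] (G : SimpleGraph V) (c : Sym2 V → ℕ) (ℓ δ : ℕ)
    (hl : 3 ≤ ℓ) (hn : Fintype.card V + 6 * ℓ < 2 * δ) (hδ : ∀ z, δ ≤ #(colSet G c z))
    (hmin : ∀ v w, G.Adj v w → (∀ u, G.Adj v u → c s(v, u) = c s(v, w) → u = w) ∨
      (∀ u, G.Adj w u → c s(w, u) = c s(v, w) → u = v)) :
    HasRainbowCycle G c ℓ := by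
  classical
  by_contra hno
  -- star sizes
  let M : V → ℕ → Finset V := fun v b => univ.filter (fun u => G.Adj v u ∧ c s(v, u) = b)
  have hM : ∀ v b u, u ∈ M v b ↔ G.Adj v u ∧ c s(v, u) = b := by intro v b u; simp [M]
  -- a maximal star
  obtain ⟨v, α, hvα, hmax⟩ : ∃ v α, α ∈ colSet G c v ∧ ∀ w β, #(M w β) ≤ #(M v α) := by
    have hne : ((univ : Finset V).sigma (fun v => colSet G c v)).Nonempty := by
      obtain ⟨v0⟩ := ‹Nonempty V›
      have : 0 < #(colSet G c v0) := by have := hδ v0; omega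
      obtain ⟨b, hb⟩ := card_pos.1 this
      exact ⟨⟨v0, b⟩, by simpa using hb⟩
    obtain ⟨⟨v, α⟩, hm, hx⟩ := exists_max_image _ (fun q : (Σ _ : V, ℕ) => #(M q.1 q.2)) hne
    refine ⟨v, α, by simpa using hm, ?_⟩
    intro w β
    by_cases hβ : β ∈ colSet G c w
    · exact hx ⟨w, β⟩ (by simpa using hβ)
    · have : M w β = ∅ := by
        rw [eq_empty_iff_forall_notMem]
        intro u hu
        exact hβ ((mem_colSet _ _ _ _).2 ⟨u, (hM _ _ _).1 hu⟩)
      simp [this]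
  set R := #(M v α) with hR
  let N : Finset V := univ.filter (fun u => G.Adj v u)
  have hN : ∀ w, w ∈ N ↔ G.Adj v w := by intro w; simp [N]
  let S : Finset ℕ := (colSet G c v).filter (fun b => 2 ≤ #(M v b))
  let U : Finset ℕ := (colSet G c v).filter (fun b => ¬ 2 ≤ #(M v b))
  have hSU : #S + #U = #(colSet G c v) := card_filter_add_card_filter_not _
  have hpos : ∀ b ∈ colSet G c v, 1 ≤ #(M v b) := by
    intro b hb
    obtain ⟨u, hu⟩ := (mem_colSet _ _ _ _).1 hb
    exact card_pos.2 ⟨u, (hM _ _ _).2 hu⟩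
  have hd : #N = ∑ b ∈ colSet G c v, #(M v b) := by
    rw [card_eq_sum_card_fiberwise (f := fun u => c s(v, u)) (t := colSet G c v)]
    · refine sum_congr rfl fun b _ => ?_
      congr 1
      ext u
      simp [N, M]
    · intro u hu
      have hu' : u ∈ N := hu
      exact (mem_colSet _ _ _ _).2 ⟨u, (hN u).1 hu', rfl⟩
  have hR1 : 1 ≤ R := hpos α hvα
  have hda : #(colSet G c v) + #S + R ≤ #N + 2 := by
    have : ∑ b ∈ colSet G c v, (1 + (if 2 ≤ #(M v b) then 1 else 0) + (if b = α then R else 0)) ≤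
        ∑ b ∈ colSet G c v, (#(M v b) + (if b = α then 2 else 0)) := by
      refine sum_le_sum fun b hb => ?_
      have := hpos b hb
      by_cases h : b = α
      · subst h
        simp only [if_true]
        split_ifs <;> omega
      · simp only [h, if_false]
        split_ifs <;> omega
    rw [sum_add_distrib, sum_add_distrib, sum_add_distrib, ← hd, sum_ite_eq', sum_ite_eq',
      if_pos hvα, if_pos hvα, ← card_filter] at this
    simpa using this
  have hdb : #(colSet G c v) + R ≤ #N + 1 := by
    have : ∑ b ∈ colSet G c v, (1 + (if b = α then R else 0)) ≤
        ∑ b ∈ colSet G c v, (#(M v b) + (if b = α then 1 else 0)) := by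
      refine sum_le_sum fun b hb => ?_
      have := hpos b hb
      by_cases h : b = α
      · subst h
        simp only [if_true]
        omega
      · simp only [h, if_false]
        omega
    rw [sum_add_distrib, sum_add_distrib, ← hd, sum_ite_eq', sum_ite_eq',
      if_pos hvα, if_pos hvα] at this
    simpa using this
  have hdn : #N ≤ Fintype.card V := card_le_univ N
  have hδv := hδ v
  obtain ⟨k, rfl⟩ : ∃ k, ℓ = k + 3 := ⟨ℓ - 3, by omega⟩
  let Y : Finset V := univ.filter (fun w => RP G c S v (k+1) w)
  obtain ⟨z, hz⟩ := RP_exists G c S v δ hδ k (by omega)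
  have hYc := RP_succ G c S v k z hz Y (by intro w hw; simpa [Y] using hw)
  have hδz := hδ z
  let B : Finset V := N.filter (fun w => c s(v, w) ∈ U)
  have huniq : ∀ w w', G.Adj v w → G.Adj v w' → c s(v, w) = c s(v, w') → c s(v, w) ∉ S →
      w = w' := by
    intro w w' h1 h2 h3 h4
    have h5 : c s(v, w) ∈ colSet G c v := (mem_colSet _ _ _ _).2 ⟨w, h1, rfl⟩
    have h6 : ¬ 2 ≤ #(M v (c s(v, w))) := fun h => h4 (mem_filter.2 ⟨h5, h⟩)
    exact card_le_one.1 (by omega) w ((hM _ _ _).2 ⟨h1, rfl⟩) w' ((hM _ _ _).2 ⟨h2, h3.symm⟩)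
  have hBU : #B ≤ #U := by
    refine card_le_card_of_injOn (fun w => c s(v, w)) ?_ ?_
    · intro w hw
      exact (mem_filter.1 hw).2
    · intro w hw w' hw' heq
      have h1 := mem_filter.1 (show w ∈ B from hw)
      have h2 := mem_filter.1 (show w' ∈ B from hw')
      refine huniq w w' ((hN _).1 h1.1) ((hN _).1 h2.1) heq ?_
      intro h
      exact (mem_filter.1 h1.2).2 (mem_filter.1 h).2
  have hYv : ∀ y ∈ Y, y ≠ v := by
    rintro y hy rfl
    obtain ⟨p, hp, hlen, -⟩ := (mem_filter.1 hy).2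
    rw [SimpleGraph.Walk.isPath_iff_eq_nil] at hp
    subst hp
    simp at hlen
  let r : V → V → Prop := fun y w => G.Adj y w ∧ c s(y, w) = c s(v, w)
  have hcount : #Y * (δ + #N - Fintype.card V - 3 * (k + 1) - 1) ≤ #B * (R - 1) := by
    refine card_mul_le_card_mul r ?_ ?_
    · intro y hy
      have := arcs_count G c S v y (k+1) (mem_filter.1 hy).2 hno N hN huniq
        (B.bipartiteAbove r y) ?_
      · have := hδ y
        omega
      · intro w h1 h2 h3
        rw [mem_bipartiteAbove]
        refine ⟨mem_filter.2 ⟨(hN w).2 h1, ?_⟩, h2, h3⟩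
        refine mem_filter.2 ⟨(mem_colSet _ _ _ _).2 ⟨w, h1, rfl⟩, ?_⟩
        rcases hmin v w h1 with h | h
        · have : #(M v (c s(v, w))) ≤ 1 := by
            refine card_le_one.2 fun a ha b hb => ?_
            rw [hM] at ha hb
            rw [h a ha.1 ha.2, h b hb.1 hb.2]
          omega
        · exact absurd (h y h2.symm (by rw [Sym2.eq_swap, h3])) (hYv y hy)
    · intro w hw
      have hvw := (hN w).1 (mem_filter.1 hw).1
      have hvM : v ∈ M w (c s(v, w)) := (hM _ _ _).2 ⟨hvw.symm, by rw [Sym2.eq_swap]⟩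
      have h1 : Y.bipartiteBelow r w ⊆ (M w (c s(v, w))).erase v := by
        intro y hy
        rw [mem_bipartiteBelow] at hy
        refine mem_erase.2 ⟨hYv y hy.1, (hM _ _ _).2 ⟨hy.2.1.symm, ?_⟩⟩
        rw [Sym2.eq_swap, hy.2.2]
      have h2 := card_le_card h1
      rw [card_erase_of_mem hvM] at h2
      have := hmax w (c s(v, w))
      omega
  obtain ⟨t, ht⟩ : ∃ t, #(colSet G c v) = δ + t := ⟨_, (Nat.add_sub_cancel' hδv).symm⟩
  obtain ⟨ρ, hρ⟩ : ∃ ρ, R = ρ + 1 := ⟨R - 1, by omega⟩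
  have hE : ρ + (t + 2 * k + 1) ≤ δ + #N - Fintype.card V - 3 * (k + 1) - 1 := by omega
  have hY1 : ρ + 1 ≤ #Y := by omega
  have hB1 : #B ≤ #Y + (t + 2 * k + 1) := by omega
  have hfin : #Y * (ρ + (t + 2 * k + 1)) ≤ (#Y + (t + 2 * k + 1)) * ρ := by
    calc _ ≤ _ := Nat.mul_le_mul_left _ hE
      _ ≤ _ := hcount
      _ ≤ _ := by rw [hρ]; exact Nat.mul_le_mul_right _ hB1
  nlinarith

theorem core [Fintype V] [Nonempty V] (G : SimpleGraph V) (c : Sym2 V → ℕ) (ℓ δ : ℕ)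
    (hl : 3 ≤ ℓ) (hn : Fintype.card V + 6 * ℓ < 2 * δ) (hδ : ∀ z, δ ≤ #(colSet G c z)) :
    HasRainbowCycle G c ℓ := by
  classical
  have hfin : {H : SimpleGraph V | H ≤ G ∧ ∀ z, δ ≤ #(colSet H c z)}.Finite := Set.toFinite _
  obtain ⟨H, hH⟩ := hfin.exists_minimal ⟨G, le_refl _, hδ⟩
  have hHG : H ≤ G := hH.prop.1
  have : HasRainbowCycle H c ℓ := by
    refine core_min H c ℓ δ hl hn hH.prop.2 ?_
    intro v w hvw
    by_contra hcon
    push Not at hcon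
    obtain ⟨⟨a, ha, hac, haw⟩, b, hb, hbc, hbv⟩ := hcon
    have hne : v ≠ w := hvw.ne
    have hle : H.deleteEdges {s(v, w)} ≤ H := SimpleGraph.deleteEdges_le _
    have h2 := hH.le_of_le (y := H.deleteEdges {s(v, w)}) ⟨hle.trans hHG, ?_⟩ hle
    · have := h2 hvw
      simp at this
    · intro z
      refine (hH.prop.2 z).trans (card_le_card ?_)
      intro β hβ
      rw [mem_colSet] at hβ ⊢
      obtain ⟨u, hu, huc⟩ := hβ
      by_cases hedge : s(z, u) = s(v, w)
      · rw [Sym2.eq_iff] at hedge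
        rcases hedge with ⟨rfl, rfl⟩ | ⟨rfl, rfl⟩
        · refine ⟨a, ?_, hac.trans huc⟩
          simp only [SimpleGraph.deleteEdges_adj, Set.mem_singleton_iff, Sym2.eq_iff]
          grind
        · refine ⟨b, ?_, by rw [hbc, Sym2.eq_swap, huc]⟩
          simp only [SimpleGraph.deleteEdges_adj, Set.mem_singleton_iff, Sym2.eq_iff]
          grind
      · exact ⟨u, by simpa [SimpleGraph.deleteEdges_adj] using ⟨hu, by simpa using hedge⟩, huc⟩
  obtain ⟨u, p, hp, hlen, hnd⟩ := this
  refine ⟨u, p.mapLe hHG, hp.mapLe hHG, by simpa using hlen, by simpa using hnd⟩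

theorem stmt15 (ℓ : ℕ) (hl : 3 ≤ ℓ) [Fintype V] (G : SimpleGraph V) (c : Sym2 V → ℕ)
    (hno : ¬ HasRainbowCycle G c ℓ) (A : Finset V) (hA : A.Nonempty) :
    ∃ a ∈ A, (colorDegOn G c a ↑A : ℚ) ≤ (A.card : ℚ) / 2 + 3 * ℓ := by
  classical
  by_contra hcon
  push Not at hcon
  apply hno
  have hne : Nonempty A := hA.to_subtype
  let H : SimpleGraph A := G.comap Subtype.val
  let c' : Sym2 A → ℕ := fun e => c (e.map Subtype.val)
  have hdeg : ∀ z : A, #(colSet H c' z) = colorDegOn G c z ↑A := by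
    intro z
    rw [colorDegOn, ← Set.ncard_coe_finset]
    congr 1
    ext b
    simp only [mem_coe, mem_colSet, Set.mem_setOf_eq]
    constructor
    · rintro ⟨u, hu, rfl⟩
      exact ⟨u, u.2, (show G.Adj z u from hu).symm, by simp [c', Sym2.eq_swap]⟩
    · rintro ⟨u, huA, hu, rfl⟩
      exact ⟨⟨u, huA⟩, hu.symm, by simp [c', Sym2.eq_swap]⟩
  have hcyc : HasRainbowCycle H c' ℓ := by
    refine core H c' ℓ ((#A + 6 * ℓ) / 2 + 1) hl (by rw [Fintype.card_coe]; omega) ?_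
    intro z
    have h := hcon z z.2
    rw [← hdeg] at h
    have h' : ((#A + 6 * ℓ : ℕ) : ℚ) < ((2 * #(colSet H c' z) : ℕ) : ℚ) := by
      push_cast
      linarith
    have h'' : #A + 6 * ℓ < 2 * #(colSet H c' z) := by exact_mod_cast h'
    omega
  obtain ⟨u, p, hp, hlen, hnd⟩ := hcyc
  let f : H →g G := ⟨Subtype.val, fun h => h⟩
  have hf : Function.Injective f := Subtype.val_injective
  refine ⟨f u, p.map f, hp.map hf, by simpa using hlen, ?_⟩
  rw [SimpleGraph.Walk.edges_map, List.map_map]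
  exact hnd
end
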